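/- arXiv:2002.09186 — 2 statements merged into one kernel-verified Lean document; each statement's English description precedes it below -/
import Mathlib

section
/- Let D be a discrete vector field (a matching on the Hasse diagram pairing each simplex α with a cofacet β, each simplex in at most one pair, empty set unmatched) on a finite simplicial complex K, and suppose D has no closed gradient paths. If D has exactly one critical (unmatched) 0-simplex and all other critical simplices have dimension ≥ N, then K is (N-1)-connected. -/
open scoped Classical

noncomputable section

/-- The geometric realization of a simplicial complex `K` on the vertex set `Fin n`,
inside the standard simplex. -/
def realization (n : ℕ) (K : Set (Finset (Fin n))) : Set (Fin n → ℝ) :=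
  {x ∈ stdSimplex ℝ (Fin n) | (Finset.univ.filter fun v => x v ≠ 0) ∈ K}

/-!
Take a simplex of maximal dimension. If all of these are matched, following the matching backwards
from the tails of top-dimensional pairs would produce a closed gradient path unless some tail `α`
is a free face of its partner; such a pair can be collapsed. If one of them is critical, it has
dimension at least `N`, and it is simply removed. Inductively, `K` is reduced to the critical
vertex.

Read backwards on maps from a sphere of dimension `j < N`, each step preserves null-homotopies. For
a collapse, the sphere is pushed from `α` towards the opposite vertex. For the removal of a simplex
`σ`, the coordinates of the sphere in `σ` are first perturbed to be smooth wherever they are all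
bounded below; by a dimension count they then miss some ray, and the sphere is pushed away from it,
off `σ`.
-/

section Combinatorics

variable {V : Type*} {K : Set (Finset V)} {D : Set (Finset V × Finset V)} {α β σ : Finset V}

/-- The deletion of the face `α` from `K`: all simplices outside the open star of `α`. -/
def faceDeletion (K : Set (Finset V)) (α : Finset V) : Set (Finset V) :=
  {γ ∈ K | ¬ α ⊆ γ}

theorem faceDeletion_subset : faceDeletion K α ⊆ K :=
  Set.sep_subset _ _

theorem isLowerSet_faceDeletion (hK : IsLowerSet K) (α : Finset V) :
    IsLowerSet (faceDeletion K α) :=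
  fun _ _ hle hγ => ⟨hK hle hγ.1, fun h => hγ.2 (h.trans hle)⟩

/-- `K` can be reduced to a single vertex by deletions of two kinds: collapses, which delete a face
whose link is a cone with apex `v`, and deletions of faces of dimension at least `N`. -/
inductive ReducesToPoint [DecidableEq V] (N : ℕ) : Set (Finset V) → Prop
  | point (v : V) : ReducesToPoint N (Set.Iic {v})
  | collapse (K : Set (Finset V)) (α : Finset V) (v : V) (hα : α.Nonempty) (hv : v ∉ α)
      (hcone : ∀ γ ∈ K, α ⊆ γ → insert v γ ∈ K) (hdel : ReducesToPoint N (faceDeletion K α)) :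
      ReducesToPoint N K
  | delete (K : Set (Finset V)) (σ : Finset V) (hσ : N < σ.card)
      (hdel : ReducesToPoint N (faceDeletion K σ)) : ReducesToPoint N K

/-- A simplex is critical for a matching `D` if it belongs to no pair of `D`. -/
def IsCritical (D : Set (Finset V × Finset V)) (σ : Finset V) : Prop :=
  ∀ β, (σ, β) ∉ D ∧ (β, σ) ∉ D

/-- `D` is a discrete gradient vector field on `K`: a matching of the Hasse diagram of the nonempty
simplices of `K` without closed gradient paths. A pair `(α, β) ∈ D` is the arrow from `α` to its
cofacet `β`. -/
structure IsGradientVectorField (K : Set (Finset V)) (D : Set (Finset V × Finset V)) : Prop where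
  pair : ∀ q ∈ D, q.1 ∈ K ∧ q.2 ∈ K ∧ q.1 ⊆ q.2 ∧ q.2.card = q.1.card + 1 ∧ q.1 ≠ ∅
  head_unique : ∀ α β β', (α, β) ∈ D → (α, β') ∈ D → β = β'
  tail_unique : ∀ α α' β, (α, β) ∈ D → (α', β) ∈ D → α = α'
  not_head_and_tail : ∀ α β γ, (α, β) ∈ D → (β, γ) ∈ D → False
  acyclic : ¬ ∃ (m : ℕ) (a b : ℕ → Finset V), 0 < m ∧
    (∀ i < m, (a i, b i) ∈ D ∧ a (i + 1) ⊆ b i ∧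
      (a (i + 1)).card + 1 = (b i).card ∧ a (i + 1) ≠ a i) ∧
    a m = a 0

theorem exists_isPeriodicPt_of_finite {T : Type*} [Finite T] [Nonempty T] (f : T → T) :
    ∃ m > 0, ∃ x, Function.IsPeriodicPt f m x := by
  obtain ⟨p, q, hpq, h⟩ :=
    Finite.exists_ne_map_eq_of_infinite fun k => f^[k] (Classical.arbitrary T)
  wlog hlt : p < q generalizing p q
  · exact this q p hpq.symm h.symm (by omega)
  refine ⟨q - p, by omega, f^[p] (Classical.arbitrary T), ?_⟩
  rw [Function.IsPeriodicPt, Function.IsFixedPt, ← Function.iterate_add_apply,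
    Nat.sub_add_cancel hlt.le]
  exact h.symm

namespace IsGradientVectorField

theorem card_head (hD : IsGradientVectorField K D) (h : (α, β) ∈ D) : β.card = α.card + 1 :=
  (hD.pair _ h).2.2.2.1

theorem tail_nonempty (hD : IsGradientVectorField K D) (h : (α, β) ∈ D) : α.Nonempty :=
  Finset.nonempty_iff_ne_empty.2 (hD.pair _ h).2.2.2.2

theorem two_le_card_head (hD : IsGradientVectorField K D) (h : (α, β) ∈ D) : 2 ≤ β.card :=
  (hD.card_head h).symm ▸ Nat.succ_le_succ (hD.tail_nonempty h).card_pos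

theorem exists_insert_eq [DecidableEq V] (hD : IsGradientVectorField K D) (h : (α, β) ∈ D) :
    ∃ v ∉ α, insert v α = β :=
  Finset.exists_eq_insert_iff.2 ⟨(hD.pair _ h).2.2.1, (hD.card_head h).symm⟩

theorem exists_tail_of_not_isCritical (hD : IsGradientVectorField K D)
    (hmax : ∀ γ ∈ K, γ.card ≤ σ.card) (hσ : ¬ IsCritical D σ) : ∃ α, (α, σ) ∈ D := by
  by_contra! hno
  refine hσ fun β => ⟨fun hβ => ?_, hno β⟩
  exact (hmax β (hD.pair _ hβ).2.1).not_gt (hD.card_head hβ ▸ Nat.lt_succ_self _)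

/- If no pair were free, each tail `α` of a top-dimensional pair would be a facet of the head of
another such pair. Following these backwards among finitely many simplices closes up to a
gradient path, traversed in reverse. -/
theorem exists_free_pair (hD : IsGradientVectorField K D) (hfin : K.Finite) (hσ : σ ∈ K)
    (hmax : ∀ γ ∈ K, γ.card ≤ σ.card) (hmatch : ∀ γ ∈ K, γ.card = σ.card → ∃ α, (α, γ) ∈ D) :
    ∃ α β, (α, β) ∈ D ∧ ∀ γ ∈ K, α ⊆ γ → γ = α ∨ γ = β := by
  by_contra! hfree
  let T := {α : Finset V // ∃ β, (α, β) ∈ D ∧ β.card = σ.card}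
  have : Finite T := Set.Finite.to_subtype (s := {α | ∃ β, (α, β) ∈ D ∧ β.card = σ.card}) <|
    hfin.subset fun α ⟨_, hαβ, _⟩ => (hD.pair _ hαβ).1
  have : Nonempty T := (hmatch σ hσ rfl).elim fun α hα => ⟨⟨α, σ, hα, rfl⟩⟩
  have hstep : ∀ α : T, ∃ (α' : T) (γ : Finset V), (α'.1, γ) ∈ D ∧ α.1 ⊆ γ ∧
      α.1.card + 1 = γ.card ∧ α.1 ≠ α'.1 := by
    rintro ⟨α, β, hαβ, hβ⟩
    obtain ⟨γ, hγ, hαγ, hγα, hγβ⟩ := hfree α β hαβ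
    have hlt : α.card < γ.card := Finset.card_lt_card (hαγ.ssubset_of_ne hγα.symm)
    have hβα := hD.card_head hαβ
    have hγcard : γ.card = σ.card := (hmax γ hγ).antisymm (by omega)
    obtain ⟨α', hα'⟩ := hmatch γ hγ hγcard
    refine ⟨⟨α', γ, hα', hγcard⟩, γ, hα', hαγ, ?_, ?_⟩
    · exact (hβα.symm.trans (hβ.trans hγcard.symm) :)
    · rintro rfl
      exact hγβ (hD.head_unique _ _ _ hα' hαβ)
  choose prev up hup using hstep
  obtain ⟨m, hm, x, hx⟩ := exists_isPeriodicPt_of_finite prev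
  refine hD.acyclic ⟨m, fun i => (prev^[m - i] x).1, fun i => up (prev^[m - (i + 1)] x), hm,
    fun i hi => ?_, by simp [hx.eq]⟩
  have hprev : prev^[m - i] x = prev (prev^[m - (i + 1)] x) := by
    rw [← Function.iterate_succ_apply' prev, show m - i = (m - (i + 1)).succ by omega]
  simpa only [hprev] using hup (prev^[m - (i + 1)] x)

theorem inter_prod (hD : IsGradientVectorField K D) (L : Set (Finset V)) :
    IsGradientVectorField L (D ∩ L ×ˢ L) where
  pair q hq := ⟨hq.2.1, hq.2.2, (hD.pair q hq.1).2.2⟩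
  head_unique _ _ _ h h' := hD.head_unique _ _ _ h.1 h'.1
  tail_unique _ _ _ h h' := hD.tail_unique _ _ _ h.1 h'.1
  not_head_and_tail _ _ _ h h' := hD.not_head_and_tail _ _ _ h.1 h'.1
  acyclic := fun ⟨m, a, b, hm, hpath, hclosed⟩ =>
    hD.acyclic ⟨m, a, b, hm, fun i hi => ⟨(hpath i hi).1.1, (hpath i hi).2⟩, hclosed⟩

theorem isCritical_of_isCritical_faceDeletion (hD : IsGradientVectorField K D)
    (hα : ∀ q ∈ D, α ⊆ q.2 → α ⊆ q.1) (hσ : σ ∈ faceDeletion K α)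
    (hcrit : IsCritical (D ∩ faceDeletion K α ×ˢ faceDeletion K α) σ) : IsCritical D σ := by
  refine fun β => ⟨fun h => (hcrit β).1 ⟨h, hσ, ?_⟩, fun h => (hcrit β).2 ⟨h, ?_, hσ⟩⟩
  · exact ⟨(hD.pair _ h).2.1, fun hsub => hσ.2 (hα _ h hsub)⟩
  · exact ⟨(hD.pair _ h).1, fun hsub => hσ.2 (hsub.trans (hD.pair _ h).2.2.1)⟩

theorem subset_left_of_free (hD : IsGradientVectorField K D) (hαβ : (α, β) ∈ D)
    (hfree : ∀ γ ∈ K, α ⊆ γ → γ = α ∨ γ = β) : ∀ q ∈ D, α ⊆ q.2 → α ⊆ q.1 := by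
  rintro ⟨γ, δ⟩ hq hsub
  obtain rfl | rfl := hfree δ (hD.pair _ hq).2.1 hsub
  · exact (hD.not_head_and_tail _ _ _ hq hαβ).elim
  · exact (hD.tail_unique _ _ _ hαβ hq).subset

theorem subset_left_of_isCritical (hD : IsGradientVectorField K D)
    (hmax : ∀ γ ∈ K, γ.card ≤ σ.card) (hσ : IsCritical D σ) : ∀ q ∈ D, σ ⊆ q.2 → σ ⊆ q.1 := by
  rintro ⟨γ, δ⟩ hq hsub
  have hδ : σ = δ := Finset.eq_of_subset_of_card_le hsub (hmax δ (hD.pair _ hq).2.1)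
  exact ((hσ γ).2 (hδ ▸ hq)).elim

theorem reducesToPoint [DecidableEq V] (hD : IsGradientVectorField K D) (hfin : K.Finite)
    (hK : IsLowerSet K) {v : V} (hv : {v} ∈ K) (hvcrit : IsCritical D {v}) {N : ℕ}
    (hcrit : ∀ σ ∈ K, σ ≠ ∅ → σ ≠ {v} → IsCritical D σ → N < σ.card) :
    ReducesToPoint N K := by
  induction hk : K.ncard using Nat.strong_induction_on generalizing K D with
  | _ k ih =>
  have hdel : ∀ α ∈ K, ¬ α ⊆ {v} → (∀ q ∈ D, α ⊆ q.2 → α ⊆ q.1) →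
      ReducesToPoint N (faceDeletion K α) := fun α hαK hαv hα =>
    ih _ (hk ▸ Set.ncard_lt_ncard ⟨faceDeletion_subset, fun h => (h hαK).2 subset_rfl⟩ hfin)
      (hD.inter_prod _) (hfin.subset faceDeletion_subset) (isLowerSet_faceDeletion hK α)
      ⟨hv, hαv⟩ (fun β => ⟨fun h => (hvcrit β).1 h.1, fun h => (hvcrit β).2 h.1⟩)
      (fun σ hσ hne hneq h => hcrit σ hσ.1 hne hneq
        (hD.isCritical_of_isCritical_faceDeletion hα hσ h)) rfl
  by_cases hKv : K ⊆ Set.Iic {v}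
  · rw [hKv.antisymm (hK.Iic_subset hv)]
    exact .point v
  obtain ⟨σ, ⟨hσ, hσv⟩, hσmax⟩ := Set.exists_max_image (K \ Set.Iic {v}) Finset.card hfin.sdiff
    (Set.sdiff_nonempty.2 hKv)
  have hσne : σ.Nonempty := Finset.nonempty_iff_ne_empty.2 fun h => hσv (by simp [h])
  have hmax : ∀ γ ∈ K, γ.card ≤ σ.card := fun γ hγ => by
    by_cases hγv : γ ∈ Set.Iic {v}
    · exact (Finset.card_le_card hγv).trans hσne.card_pos
    · exact hσmax γ ⟨hγ, hγv⟩
  by_cases hex : ∃ τ ∈ K \ Set.Iic {v}, τ.card = σ.card ∧ IsCritical D τ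
  · obtain ⟨τ, ⟨hτ, hτv⟩, hτcard, hτcrit⟩ := hex
    obtain ⟨hτne, hτneq⟩ : τ ≠ ∅ ∧ τ ≠ {v} := by
      simpa [Finset.subset_singleton_iff] using hτv
    exact .delete K τ (hcrit τ hτ hτne hτneq hτcrit)
      (hdel τ hτ hτv (hD.subset_left_of_isCritical (hτcard ▸ hmax) hτcrit))
  · push Not at hex
    have htail : ∀ γ ∈ K \ Set.Iic {v}, γ.card = σ.card → ∃ α, (α, γ) ∈ D := fun γ hγ hcard =>
      hD.exists_tail_of_not_isCritical (hcard ▸ hmax) (hex γ hγ hcard)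
    have hσcard : 2 ≤ σ.card := (htail σ ⟨hσ, hσv⟩ rfl).elim fun _ => hD.two_le_card_head
    obtain ⟨α, β, hαβ, hfree⟩ := hD.exists_free_pair hfin hσ hmax fun γ hγ hcard =>
      htail γ ⟨hγ, fun h => by
        have : γ.card ≤ 1 := Finset.card_le_card h
        omega⟩ hcard
    obtain ⟨w, hw, rfl⟩ := hD.exists_insert_eq hαβ
    obtain ⟨hα, hβ, -, -, hαne⟩ := hD.pair _ hαβ
    refine .collapse K α w (hD.tail_nonempty hαβ) hw (fun γ hγ hsub => ?_)
      (hdel α hα (fun h => ?_) (hD.subset_left_of_free hαβ hfree))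
    · obtain rfl | rfl := hfree γ hγ hsub <;> simpa using hβ
    · obtain rfl := (Finset.subset_singleton_iff.1 h).resolve_left hαne
      exact (hvcrit _).1 hαβ

end IsGradientVectorField

end Combinatorics

section Carrier

variable {n : ℕ} {K L : Set (Finset (Fin n))} {γ : Finset (Fin n)} {x y : Fin n → ℝ}

/-- The carrier of a vector of barycentric coordinates: the set of its nonzero coordinates. A point
of the simplex lies in `realization n K` if and only if its carrier is a simplex of `K`. -/
def carrier (x : Fin n → ℝ) : Finset (Fin n) :=
  Finset.univ.filter fun v => x v ≠ 0

theorem mem_carrier {i : Fin n} : i ∈ carrier x ↔ x i ≠ 0 := by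
  simp [carrier]

theorem carrier_subset_iff : carrier x ⊆ γ ↔ ∀ i ∉ γ, x i = 0 := by
  simp only [Finset.subset_iff, mem_carrier, not_imp_comm]

theorem carrier_smul_of_ne_zero {c : ℝ} (hc : c ≠ 0) (x : Fin n → ℝ) :
    carrier (c • x) = carrier x := by
  ext i
  simp [mem_carrier, hc]

theorem carrier_lineMap_subset (x y : Fin n → ℝ) (t : ℝ) :
    carrier (AffineMap.lineMap x y t) ⊆ carrier x ∪ carrier y := by
  refine carrier_subset_iff.2 fun i hi => ?_
  simp only [Finset.mem_union, mem_carrier, not_or, not_not] at hi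
  simp [AffineMap.lineMap_apply, hi]

theorem realization_mono (h : L ⊆ K) : realization n L ⊆ realization n K :=
  fun _ hx => ⟨hx.1, h hx.2⟩

theorem inv_sum_smul_mem_realization (h0 : 0 ≤ x) (hne : x ≠ 0) (hx : carrier x ∈ K) :
    (∑ i, x i)⁻¹ • x ∈ realization n K := by
  have hsum : 0 < ∑ i, x i := Fintype.sum_pos (h0.lt_of_ne hne.symm)
  refine ⟨⟨fun i => mul_nonneg (inv_nonneg.2 hsum.le) (h0 i), ?_⟩, ?_⟩
  · simp only [Pi.smul_apply, smul_eq_mul, ← Finset.mul_sum, inv_mul_cancel₀ hsum.ne']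
  · change carrier _ ∈ K
    rwa [carrier_smul_of_ne_zero (inv_ne_zero hsum.ne')]

theorem realization_Iic_singleton (v : Fin n) :
    realization n (Set.Iic {v}) = {Pi.single v 1} := by
  ext x
  refine ⟨fun ⟨⟨_, hsum⟩, hx⟩ => ?_, ?_⟩
  · have hoff : ∀ i ≠ v, x i = 0 := fun i hi =>
      carrier_subset_iff.1 hx i (Finset.notMem_singleton.2 hi)
    rw [Fintype.sum_eq_single v hoff] at hsum
    exact funext fun i => by
      obtain rfl | hi := eq_or_ne i v
      · simpa using hsum
      · simpa [hi] using hoff i hi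
  · rintro rfl
    exact ⟨single_mem_stdSimplex ℝ v, carrier_subset_iff.2 fun i hi =>
      Pi.single_eq_of_ne (Finset.notMem_singleton.1 hi) 1⟩

end Carrier

section Homotopies

variable {n : ℕ} {K L : Set (Finset (Fin n))} {σ : Finset (Fin n)} {S : Type*} [TopologicalSpace S]

theorem homotopic_of_carrier_union_mem (hK : IsLowerSet K) (g h : C(S, realization n K))
    (H : ∀ s, carrier (g s).1 ∪ carrier (h s).1 ∈ K) : g.Homotopic h := by
  refine ⟨⟨⟨fun q => ⟨AffineMap.lineMap (g q.2).1 (h q.2).1 (q.1 : ℝ), ?_, ?_⟩, ?_⟩, ?_, ?_⟩⟩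
  · exact (convex_stdSimplex ℝ (Fin n)).lineMap_mem (g q.2).2.1 (h q.2).2.1 q.1.2
  · exact hK (carrier_lineMap_subset _ _ _) (H q.2)
  · simp only [AffineMap.lineMap_apply_module]
    fun_prop
  · exact fun s => Subtype.ext (AffineMap.lineMap_apply_zero _ _)
  · exact fun s => Subtype.ext (AffineMap.lineMap_apply_one _ _)

theorem exists_homotopic_normalize (hK : IsLowerSet K) (hLK : L ⊆ K) (g : C(S, realization n K))
    (u : C(S, Fin n → ℝ)) (hu0 : ∀ s, 0 ≤ u s) (hu : ∀ s, u s ≠ 0) (huL : ∀ s, carrier (u s) ∈ L)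
    (hgu : ∀ s, carrier (g s).1 ∪ carrier (u s) ∈ K) :
    ∃ g' : C(S, realization n L), (∀ s, (g' s).1 = (∑ i, u s i)⁻¹ • u s) ∧
      g.Homotopic ((ContinuousMap.inclusion (realization_mono hLK)).comp g') := by
  have hsum : ∀ s, ∑ i, u s i ≠ 0 := fun s =>
    (Fintype.sum_pos ((hu0 s).lt_of_ne (hu s).symm)).ne'
  let g' : C(S, realization n L) :=
    ⟨fun s => ⟨(∑ i, u s i)⁻¹ • u s, inv_sum_smul_mem_realization (hu0 s) (hu s) (huL s)⟩,
      Continuous.subtype_mk (Continuous.smul (Continuous.inv₀ (by fun_prop) hsum) u.continuous) _⟩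
  refine ⟨g', fun _ => rfl, homotopic_of_carrier_union_mem hK _ _ fun s => ?_⟩
  change carrier (g s).1 ∪ carrier ((∑ i, u s i)⁻¹ • u s) ∈ K
  rw [carrier_smul_of_ne_zero (inv_ne_zero (hsum s))]
  exact hgu s

/-- The largest `t` such that `x - t • p` is nonnegative on `σ`, when `p` is positive there. -/
def minRatio (σ : Finset (Fin n)) (hσ : σ.Nonempty) (p x : Fin n → ℝ) : ℝ :=
  σ.inf' hσ fun i => x i / p i

section MinRatio

variable {hσ : σ.Nonempty} {p x : Fin n → ℝ}

theorem minRatio_mul_le (hp : ∀ i ∈ σ, 0 < p i) {i : Fin n} (hi : i ∈ σ) :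
    minRatio σ hσ p x * p i ≤ x i :=
  (le_div_iff₀ (hp i hi)).1 (Finset.inf'_le (fun i => x i / p i) hi)

theorem exists_minRatio_mul_eq (hσ : σ.Nonempty) (hp : ∀ i ∈ σ, 0 < p i) (x : Fin n → ℝ) :
    ∃ i ∈ σ, minRatio σ hσ p x * p i = x i := by
  obtain ⟨i, hi, h⟩ := Finset.exists_mem_eq_inf' hσ fun i => x i / p i
  exact ⟨i, hi, (eq_div_iff (hp i hi).ne').1 h⟩

theorem minRatio_nonneg (hp : ∀ i ∈ σ, 0 < p i) (hx : 0 ≤ x) : 0 ≤ minRatio σ hσ p x :=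
  Finset.le_inf' hσ _ fun i hi => div_nonneg (hx i) (hp i hi).le

theorem minRatio_eq_zero (hp : ∀ i ∈ σ, 0 < p i) (hx : 0 ≤ x) (hσx : ¬ σ ⊆ carrier x) :
    minRatio σ hσ p x = 0 := by
  obtain ⟨i, hi, hxi⟩ := Finset.not_subset.1 hσx
  rw [mem_carrier, not_not] at hxi
  exact (nonpos_of_mul_nonpos_left ((minRatio_mul_le hp hi).trans hxi.le) (hp i hi)).antisymm
    (minRatio_nonneg hp hx)

theorem continuous_minRatio (hσ : σ.Nonempty) (p : Fin n → ℝ) : Continuous (minRatio σ hσ p) :=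
  Continuous.finset_inf'_apply hσ fun i _ => (continuous_apply i).div_const _

end MinRatio

/- Every `g s` is moved in the direction `c - p` until a coordinate in `σ` vanishes. -/
theorem nullhomotopic_of_push (hK : IsLowerSet K) (hσ : σ.Nonempty) {p c : Fin n → ℝ}
    (hp : ∀ i ∈ σ, 0 < p i) (hpσ : ∀ i ∉ σ, p i = 0) (hc : 0 ≤ c) (hcσ : ∀ i ∈ σ, c i = 0)
    (hcK : ∀ γ ∈ K, σ ⊆ γ → γ ∪ carrier c ∈ K) (g : C(S, realization n K))
    (hg : ∀ s, ∀ t : ℝ, (g s).1 + t • (c - p) ≠ 0)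
    (hnull : ∀ g' : C(S, realization n (faceDeletion K σ)), g'.Nullhomotopic) :
    g.Nullhomotopic := by
  let t (s : S) : ℝ := minRatio σ hσ p (g s).1
  let u : C(S, Fin n → ℝ) := ⟨fun s => (g s).1 + t s • (c - p), by
    have := (continuous_minRatio hσ p).comp (continuous_subtype_val.comp g.continuous)
    exact (continuous_subtype_val.comp g.continuous).add (this.smul continuous_const)⟩
  have hu (s : S) (i : Fin n) : u s i = (g s).1 i + t s * (c i - p i) := rfl
  have ht (s : S) : 0 ≤ t s := minRatio_nonneg hp (g s).2.1.1
  have hu0 (s : S) : 0 ≤ u s := fun i => by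
    by_cases hi : i ∈ σ
    · have := minRatio_mul_le (hσ := hσ) (x := (g s).1) hp hi
      simp only [hu, hcσ i hi, Pi.zero_apply, t]
      linarith
    · simpa [hu, hpσ i hi] using add_nonneg ((g s).2.1.1 i) (mul_nonneg (ht s) (hc i))
  have hu_eq (s : S) (hs : ¬ σ ⊆ carrier (g s).1) : u s = (g s).1 := by
    ext i
    simp [hu, t, minRatio_eq_zero hp (g s).2.1.1 hs]
  have hunion (s : S) : carrier (g s).1 ∪ carrier (u s) ∈ K := by
    by_cases hs : σ ⊆ carrier (g s).1
    · refine hK (Finset.union_subset Finset.subset_union_left (carrier_subset_iff.2 fun i hi => ?_))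
        (hcK _ (g s).2.2 hs)
      simp only [Finset.mem_union, mem_carrier, not_or, not_not] at hi
      simp [hu, hi, hpσ i fun h => (mem_carrier.1 (hs h)) hi.1]
    · rw [hu_eq s hs, Finset.union_self]
      exact (g s).2.2
  have hdel (s : S) : carrier (u s) ∈ faceDeletion K σ := by
    refine ⟨hK Finset.subset_union_right (hunion s), fun h => ?_⟩
    obtain ⟨i, hi, hti⟩ := exists_minRatio_mul_eq hσ hp (g s).1
    refine mem_carrier.1 (h hi) ?_
    simp only [hu, hcσ i hi, t]
    linarith
  obtain ⟨g', -, hgg'⟩ :=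
    exists_homotopic_normalize hK faceDeletion_subset g u hu0 (fun s => hg s (t s)) hdel hunion
  obtain ⟨x, hx⟩ :=
    (hnull g').comp_right (ContinuousMap.inclusion (realization_mono faceDeletion_subset))
  exact ⟨x, hgg'.trans hx⟩

/- Moving from `α` towards the apex `v` at total speed zero keeps the sum of coordinates fixed. -/
theorem nullhomotopic_of_cone (hK : IsLowerSet K) {α : Finset (Fin n)} (hα : α.Nonempty)
    {v : Fin n} (hv : v ∉ α) (hcone : ∀ γ ∈ K, α ⊆ γ → insert v γ ∈ K) (g : C(S, realization n K))
    (hnull : ∀ g' : C(S, realization n (faceDeletion K α)), g'.Nullhomotopic) :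
    g.Nullhomotopic := by
  have hp : ∀ i ∈ α, (0 : ℝ) < (α : Set (Fin n)).indicator 1 i := fun i hi => by simp [hi]
  refine nullhomotopic_of_push hK hα (p := (α : Set (Fin n)).indicator 1)
    (c := Pi.single v (α.card : ℝ)) hp (fun i hi => by simp [hi]) (by simp)
    (fun i hi => Pi.single_eq_of_ne (ne_of_mem_of_not_mem hi hv) _) (fun γ hγ hαγ => ?_) g
    (fun s t h => ?_) hnull
  · refine hK (Finset.union_subset (Finset.subset_insert v γ) ?_) (hcone γ hγ hαγ)
    exact carrier_subset_iff.2 fun i hi =>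
      Pi.single_eq_of_ne (fun h : i = v => hi (h ▸ Finset.mem_insert_self v γ)) _
  · have hsum := congrArg (fun x : Fin n → ℝ => ∑ i, x i) h
    simp [Finset.sum_add_distrib, ← Finset.mul_sum, Set.indicator_apply, (g s).2.1.2] at hsum

end Homotopies

section GenericPerturbation

variable {n j : ℕ} {K : Set (Finset (Fin n))} {σ : Finset (Fin n)}

theorem exists_contDiff_dist_lt.{u, v} {E : Type u} [NormedAddCommGroup E] [NormedSpace ℝ E]
    [FiniteDimensional ℝ E] {F : Type v} [NormedAddCommGroup F] [NormedSpace ℝ F]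
    [TietzeExtension.{u, v} F] {A : Set E} (hA : IsClosed A) (f : C(A, F)) {δ : ℝ} (hδ : 0 < δ) :
    ∃ w : E → F, ContDiff ℝ 1 w ∧ ∀ s : A, dist (w s) (f s) < δ := by
  obtain ⟨f', rfl⟩ := f.exists_restrict_eq hA
  obtain ⟨w, hw, hwf, -⟩ :=
    f'.continuous.exists_contDiff_approx 1 (continuous_const (y := δ)) fun _ => hδ
  exact ⟨w, hw, fun s => hwf s⟩

/-- The boundary of the cube `[-1, 1] ^ (j + 1)`, a topological sphere of dimension `j`. -/
abbrev CubeSphere (j : ℕ) : Set (Fin (j + 1) → ℝ) :=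
  Metric.sphere 0 1

/- Each face of the cube contributes the image of a `C¹` map defined on `ℝ × ℝʲ`. -/
theorem dense_compl_cone_cubeSphere {F : Type*} [NormedAddCommGroup F] [NormedSpace ℝ F]
    [FiniteDimensional ℝ F] {w : (Fin (j + 1) → ℝ) → F} (hw : ContDiff ℝ 1 w)
    (hj : j + 1 < Module.finrank ℝ F) :
    Dense (Set.range fun q : ℝ × CubeSphere j => q.1 • w q.2)ᶜ := by
  let G (f : Fin (j + 1) × ℤˣ) (q : ℝ × (Fin j → ℝ)) : F :=
    q.1 • w (f.1.insertNth ((f.2 : ℤ) : ℝ) q.2)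
  have hG (f) : ContDiff ℝ 1 (G f) := by
    refine contDiff_fst.smul (hw.comp (contDiff_pi.2 fun k => ?_))
    induction k using f.1.succAboveCases with
    | x => simpa using contDiff_const
    | p k => simpa using (contDiff_apply ℝ ℝ k).fun_comp contDiff_snd
  have hsub : (Set.range fun q : ℝ × CubeSphere j => q.1 • w q.2) ⊆ ⋃ f, Set.range (G f) := by
    rintro _ ⟨⟨t, s⟩, rfl⟩
    obtain ⟨i, hi : |s.1 i| = ‖s.1‖⟩ := (IsGreatest.pi_norm s.1).1
    obtain ⟨e, he⟩ : ∃ e : ℤˣ, ((e : ℤ) : ℝ) = s.1 i := by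
      rw [mem_sphere_zero_iff_norm.1 s.2] at hi
      obtain h | h := eq_or_eq_neg_of_abs_eq hi
      · exact ⟨1, by simp [h]⟩
      · exact ⟨-1, by simp [h]⟩
    refine Set.mem_iUnion.2 ⟨(i, e), (t, i.removeNth s.1), ?_⟩
    simp only [G, he, Fin.insertNth_self_removeNth]
  refine dense_compl_of_dimH_lt_finrank ?_
  calc dimH _ ≤ ⨆ f, dimH (Set.range (G f)) := (dimH_mono hsub).trans (dimH_iUnion _).le
    _ ≤ ((j + 1 : ℕ) : ENNReal) := iSup_le fun f =>
      (hG f).dimH_range_le.trans (by simp [add_comm])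
    _ < Module.finrank ℝ F := by exact_mod_cast hj

theorem exists_between_notMem_of_dense {ι : Type*} [Finite ι] {A : Set (ι → ℝ)} (hA : Dense Aᶜ)
    {a b : ℝ} (hab : a < b) : ∃ q ∉ A, ∀ i, q i ∈ Set.Ioo a b := by
  obtain ⟨q, hq, hqA⟩ := hA.inter_open_nonempty (Set.univ.pi fun _ => Set.Ioo a b)
    (isOpen_set_pi Set.finite_univ fun _ _ => isOpen_Ioo)
    (Set.univ_pi_nonempty_iff.2 fun _ => Set.nonempty_Ioo.2 hab)
  exact ⟨q, hqA, fun i => hq i trivial⟩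

/- The coordinates in `σ` are moved towards `w` by a factor that tends to zero with the smallest of
them, so that the perturbation is small relative to the coordinates themselves. -/
theorem exists_relative_perturbation {S : Type*} [TopologicalSpace S] (hσ : σ.Nonempty) {ε : ℝ}
    (hε : 0 < ε) (g w : C(S, Fin n → ℝ)) (hg : ∀ s, 0 ≤ g s)
    (hwg : ∀ s, ∀ i ∈ σ, |w s i - g s i| ≤ ε / 2) :
    ∃ u : C(S, Fin n → ℝ), (∀ s i, u s i ∈ Set.Icc (g s i / 2) (2 * g s i)) ∧
      ∀ s, (∀ i ∈ σ, ε ≤ g s i) → ∀ i ∈ σ, u s i = w s i := by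
  let φ (s : S) : ℝ := min 1 (minRatio σ hσ (fun _ => ε) (g s))
  have hφ_nonneg (s) : 0 ≤ φ s := le_min zero_le_one (minRatio_nonneg (fun _ _ => hε) (hg s))
  have hφ_cont : Continuous φ :=
    continuous_const.min ((continuous_minRatio hσ _).comp g.continuous)
  refine ⟨⟨fun s i => g s i + if i ∈ σ then φ s * (w s i - g s i) else 0, ?_⟩, fun s i => ?_,
    fun s hs i hi => ?_⟩
  · refine continuous_pi fun i => ?_
    split_ifs <;> fun_prop
  · have hgi : 0 ≤ g s i := hg s i
    by_cases hi : i ∈ σ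
    · have hφ : φ s * ε ≤ g s i :=
        (mul_le_mul_of_nonneg_right (min_le_right _ _) hε.le).trans
          (minRatio_mul_le (fun _ _ => hε) hi)
      have habs := abs_le.1 (hwg s i hi)
      simp only [ContinuousMap.coe_mk, hi, if_true]
      constructor
      · linarith [mul_le_mul_of_nonneg_left habs.1 (hφ_nonneg s)]
      · linarith [mul_le_mul_of_nonneg_left habs.2 (hφ_nonneg s)]
    · simp only [ContinuousMap.coe_mk, hi, if_false, add_zero]
      constructor <;> linarith
  · have hφ : φ s = 1 :=
      min_eq_left (Finset.le_inf' hσ _ fun k hk => (one_le_div hε).2 (hs k hk))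
    simp [hi, hφ]

theorem exists_direction_notMem_cone {w : (Fin (j + 1) → ℝ) → Fin n → ℝ} (hw : ContDiff ℝ 1 w)
    (hσ : j + 2 ≤ σ.card) : ∃ p : Fin n → ℝ, (∀ i ∈ σ, p i ∈ Set.Ioo 1 2) ∧ (∀ i ∉ σ, p i = 0) ∧
      ∀ s : CubeSphere j, ∀ t : ℝ, ∃ i ∈ σ, t * w s i ≠ p i := by
  obtain ⟨q, hq, hq12⟩ := exists_between_notMem_of_dense
    (dense_compl_cone_cubeSphere (F := σ → ℝ) (w := fun y i => w y i)
      (contDiff_pi.2 fun i => (contDiff_apply ℝ ℝ i.1).fun_comp hw)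
      (by simpa using Nat.lt_of_succ_le hσ)) one_lt_two
  have hp (i : σ) : (if hi : i.1 ∈ σ then q ⟨i, hi⟩ else 0) = q i := dif_pos i.2
  refine ⟨fun i => if hi : i ∈ σ then q ⟨i, hi⟩ else 0,
    fun i hi => by simpa [hi] using hq12 ⟨i, hi⟩, fun i hi => dif_neg hi, fun s t => ?_⟩
  by_contra! hall
  exact hq ⟨(t, s), funext fun i => (hall i i.2).trans (hp i)⟩

theorem carrier_eq_of_mem_Icc {x u : Fin n → ℝ} (hu : ∀ i, u i ∈ Set.Icc (x i / 2) (2 * x i)) :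
    carrier u = carrier x := by
  ext i
  obtain ⟨h₁, h₂⟩ := hu i
  simp only [mem_carrier, ne_eq, not_iff_not]
  constructor <;> intro h <;> linarith

theorem ne_smul_of_exists_lt {x u p : Fin n → ℝ} (hx : x ∈ stdSimplex ℝ (Fin n))
    (hu : ∀ i, u i ∈ Set.Icc (x i / 2) (2 * x i)) (hp : ∀ i ∈ σ, p i ∈ Set.Ioo 1 2)
    (hpσ : ∀ i ∉ σ, p i = 0) (hsmall : ∃ i ∈ σ, x i < 1 / (8 * σ.card)) (t : ℝ) : u ≠ t • p := by
  rintro rfl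
  obtain ⟨i, hi, hxi⟩ := hsmall
  have hσ : (0 : ℝ) < σ.card := by exact_mod_cast Finset.card_pos.2 ⟨i, hi⟩
  have hui : 0 ≤ t * p i := (div_nonneg (hx.1 i) zero_le_two).trans (hu i).1
  have ht : 0 ≤ t := nonneg_of_mul_nonneg_left hui (zero_lt_one.trans (hp i hi).1)
  have htσ : t * σ.card < 1 / 4 := by
    have hti : t * 1 ≤ t * p i := mul_le_mul_of_nonneg_left (hp i hi).1.le ht
    have hti' : t * p i ≤ 2 * x i := (hu i).2
    calc t * σ.card < 2 * (1 / (8 * σ.card)) * σ.card := by gcongr; linarith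
      _ = 1 / 4 := by field_simp; norm_num
  have hsum_p : ∑ k, p k ≤ σ.card * 2 := by
    rw [← Finset.sum_subset σ.subset_univ fun k _ hk => hpσ k hk, ← nsmul_eq_mul]
    exact Finset.sum_le_card_nsmul _ _ _ fun k hk => (hp k hk).2.le
  have hsum : (∑ k, x k) / 2 ≤ t * ∑ k, p k := by
    rw [Finset.sum_div, Finset.mul_sum]
    exact Finset.sum_le_sum fun k _ => (hu k).1
  rw [hx.2] at hsum
  linarith [mul_le_mul_of_nonneg_left hsum_p ht]

theorem exists_homotopic_avoiding_ray (hK : IsLowerSet K) (hσ : j + 2 ≤ σ.card)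
    (g : C(CubeSphere j, realization n K)) :
    ∃ (p : Fin n → ℝ) (g' : C(CubeSphere j, realization n K)), (∀ i ∈ σ, 0 < p i) ∧
      (∀ i ∉ σ, p i = 0) ∧ g.Homotopic g' ∧ ∀ s, ∀ t : ℝ, (g' s).1 ≠ t • p := by
  have hσne : σ.Nonempty := Finset.card_pos.1 (by omega)
  have hε : (0 : ℝ) < 1 / (8 * σ.card) := by
    have := hσne.card_pos
    positivity
  let x : C(CubeSphere j, Fin n → ℝ) := ⟨fun s => (g s).1, by fun_prop⟩
  have hx0 (s) : 0 ≤ x s := (g s).2.1.1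
  obtain ⟨w, hw, hwx⟩ := exists_contDiff_dist_lt Metric.isClosed_sphere x (half_pos hε)
  obtain ⟨u, hux, huw⟩ := exists_relative_perturbation hσne hε x ⟨fun s => w s, by fun_prop⟩ hx0
    fun s i _ => ((Real.dist_eq _ _).symm.trans_le (dist_le_pi_dist _ _ i)).trans (hwx s).le
  obtain ⟨p, hp, hpσ, hpw⟩ := exists_direction_notMem_cone hw hσ
  have hu_ne (s) (t : ℝ) : u s ≠ t • p := by
    by_cases hsmall : ∃ i ∈ σ, x s i < 1 / (8 * σ.card)
    · exact ne_smul_of_exists_lt (g s).2.1 (hux s) hp hpσ hsmall t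
    push Not at hsmall
    intro hut
    obtain ⟨i, hi, hne⟩ := hpw s t⁻¹
    have hui : u s i = t * p i := congrFun hut i
    have ht : t ≠ 0 := by
      rintro rfl
      linarith [hsmall i hi, (hux s i).1]
    exact hne (by rw [← show u s i = w s i from huw s hsmall i hi, hui, inv_mul_cancel_left₀ ht])
  have hu0 (s) : 0 ≤ u s := fun i => (div_nonneg (hx0 s i) zero_le_two).trans (hux s i).1
  have hcarrier (s) : carrier (u s) = carrier (g s).1 := carrier_eq_of_mem_Icc (hux s)
  obtain ⟨g', hg', hgg'⟩ := exists_homotopic_normalize hK subset_rfl g u hu0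
    (fun s => by simpa using hu_ne s 0) (fun s => hcarrier s ▸ (g s).2.2)
    (fun s => by rw [hcarrier, Finset.union_self]; exact (g s).2.2)
  refine ⟨p, g', fun i hi => zero_lt_one.trans (hp i hi).1, hpσ, hgg', fun s t h => ?_⟩
  have hsum : 0 < ∑ i, u s i :=
    Fintype.sum_pos ((hu0 s).lt_of_ne (by simpa using (hu_ne s 0).symm))
  exact hu_ne s ((∑ i, u s i) * t) (by rw [mul_smul, ← h, hg', smul_inv_smul₀ hsum.ne'])

theorem nullhomotopic_of_delete (hK : IsLowerSet K) (hσ : j + 2 ≤ σ.card)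
    (g : C(CubeSphere j, realization n K))
    (hnull : ∀ g' : C(CubeSphere j, realization n (faceDeletion K σ)), g'.Nullhomotopic) :
    g.Nullhomotopic := by
  obtain ⟨p, g', hp, hpσ, hgg', hne⟩ := exists_homotopic_avoiding_ray hK hσ g
  obtain ⟨x, hx⟩ := nullhomotopic_of_push hK (Finset.card_pos.1 (by omega)) hp hpσ le_rfl
    (fun _ _ => rfl) (fun γ hγ _ => by simpa [carrier] using hγ) g'
    (fun s t h => hne s t (by simpa [← sub_eq_add_neg, sub_eq_zero] using h)) hnull
  exact ⟨x, hgg'.trans hx⟩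

theorem nullhomotopic_of_point (v : Fin n) {S : Type*} [TopologicalSpace S]
    (g : C(S, realization n (Set.Iic {v}))) : g.Nullhomotopic := by
  have hmem : Pi.single v 1 ∈ realization n (Set.Iic {v}) := realization_Iic_singleton v ▸ rfl
  have : Subsingleton (realization n (Set.Iic {v})) := by
    rw [realization_Iic_singleton]
    infer_instance
  refine ⟨⟨Pi.single v 1, hmem⟩, ?_⟩
  rw [show g = ContinuousMap.const S _ from ContinuousMap.ext fun s => Subsingleton.elim _ _]

theorem ReducesToPoint.nullhomotopic {N : ℕ} (h : ReducesToPoint N K) (hK : IsLowerSet K)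
    (hj : j < N) (g : C(CubeSphere j, realization n K)) : g.Nullhomotopic := by
  induction h with
  | point v => exact nullhomotopic_of_point v g
  | collapse K α v hα hv hcone _ ih =>
    exact nullhomotopic_of_cone hK hα hv hcone g fun g' => ih (isLowerSet_faceDeletion hK α) g'
  | delete K σ hσ _ ih =>
    exact nullhomotopic_of_delete hK (by omega) g fun g' => ih (isLowerSet_faceDeletion hK σ) g'

end GenericPerturbation

section HomotopyGroups

open scoped unitInterval Topology.Homotopy

variable {X : Type*} [TopologicalSpace X]

section Ball

variable (E : Type*) [NormedAddCommGroup E] [NormedSpace ℝ E]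

/-- Polar coordinates on the closed unit ball of `E`. -/
def polar : C(I × Metric.sphere (0 : E) 1, Metric.closedBall (0 : E) 1) where
  toFun q := ⟨(q.1 : ℝ) • q.2.1, by
    simpa [norm_smul, mem_sphere_zero_iff_norm.1 q.2.2, abs_of_nonneg q.1.2.1] using q.1.2.2⟩
  continuous_toFun := by fun_prop

theorem polar_surjective [Nontrivial E] : Function.Surjective (polar E) := by
  rintro ⟨x, hx⟩
  obtain rfl | hx0 := eq_or_ne x 0
  · obtain ⟨s, hs⟩ := (NormedSpace.sphere_nonempty (x := (0 : E))).2 zero_le_one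
    exact ⟨(0, ⟨s, hs⟩), Subtype.ext (zero_smul ℝ s)⟩
  · refine ⟨(⟨‖x‖, norm_nonneg x, mem_closedBall_zero_iff.1 hx⟩, ⟨‖x‖⁻¹ • x, ?_⟩), ?_⟩
    · simp [norm_smul, hx0]
    · exact Subtype.ext (smul_inv_smul₀ (norm_ne_zero_iff.2 hx0) x)

theorem isQuotientMap_polar [ProperSpace E] [Nontrivial E] : Topology.IsQuotientMap (polar E) :=
  (polar E).continuous.isClosedMap.isQuotientMap (polar E).continuous (polar_surjective E)

variable {E}

theorem polar_eq_polar_iff {q q' : I × Metric.sphere (0 : E) 1} :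
    polar E q = polar E q' ↔ q.1 = q'.1 ∧ (q.1 = 0 ∨ q.2 = q'.2) := by
  obtain ⟨⟨t, s⟩, ⟨t', s'⟩⟩ := q, q'
  constructor
  · intro h
    have hval : (t : ℝ) • s.1 = (t' : ℝ) • s'.1 := congrArg Subtype.val h
    have ht : t = t' := Subtype.ext <| by
      simpa [norm_smul, mem_sphere_zero_iff_norm.1 s.2, mem_sphere_zero_iff_norm.1 s'.2,
        abs_of_nonneg t.2.1, abs_of_nonneg t'.2.1] using congrArg norm hval
    subst ht
    refine ⟨rfl, or_iff_not_imp_left.2 fun ht0 => Subtype.ext ?_⟩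
    exact smul_right_injective E (fun h => ht0 (Subtype.ext h)) hval
  · rintro ⟨rfl : t = t', rfl | rfl⟩
    · exact Subtype.ext ((zero_smul ℝ s.1).trans (zero_smul ℝ s'.1).symm)
    · rfl

theorem exists_closedBall_extension [ProperSpace E] [Nontrivial E]
    {g : C(Metric.sphere (0 : E) 1, X)} (hg : g.Nullhomotopic) :
    ∃ F : C(Metric.closedBall (0 : E) 1, X),
      ∀ s, F (Set.inclusion Metric.sphere_subset_closedBall s) = g s := by
  obtain ⟨c, hc⟩ := hg
  obtain ⟨H⟩ := hc.symm
  have hfac : Function.FactorsThrough H.toContinuousMap (polar E) := by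
    rintro ⟨t, s⟩ ⟨t', s'⟩ h
    obtain ⟨rfl : t = t', rfl | rfl⟩ := polar_eq_polar_iff.1 h
    · exact (H.map_zero_left s).trans (H.map_zero_left s').symm
    · rfl
  refine ⟨(isQuotientMap_polar E).lift H.toContinuousMap hfac, fun s => ?_⟩
  have hpolar : Set.inclusion Metric.sphere_subset_closedBall s = polar E (1, s) :=
    Subtype.ext (one_smul ℝ s.1).symm
  rw [hpolar, ← H.map_one_left s]
  exact DFunLike.congr_fun ((isQuotientMap_polar E).lift_comp H.toContinuousMap hfac) (1, s)

end Ball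

section Cube

variable {ι : Type*}

/-- The affine map from the unit cube onto the cube `[-1, 1] ^ ι`. -/
def cubeToBall (y : ι → I) (i : ι) : ℝ :=
  2 * y i - 1

/-- The inverse of `cubeToBall`, extended to all vectors by clamping each coordinate. -/
def ballToCube (x : ι → ℝ) (i : ι) : I :=
  Set.projIcc 0 1 zero_le_one ((x i + 1) / 2)

theorem ballToCube_cubeToBall (y : ι → I) : ballToCube (cubeToBall y) = y := by
  ext i
  simp [ballToCube, cubeToBall]

theorem continuous_ballToCube : Continuous (ballToCube : (ι → ℝ) → ι → I) :=
  continuous_pi fun i => continuous_projIcc.comp (by fun_prop)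

variable [Fintype ι]

theorem norm_cubeToBall_le_one (y : ι → I) : ‖cubeToBall y‖ ≤ 1 := by
  refine (pi_norm_le_iff_of_nonneg zero_le_one).2 fun i => abs_le.2 ⟨?_, ?_⟩
  · linarith [(y i).2.1, show cubeToBall y i = 2 * y i - 1 from rfl]
  · linarith [(y i).2.2, show cubeToBall y i = 2 * y i - 1 from rfl]

theorem norm_cubeToBall_of_mem_boundary {y : ι → I} (hy : y ∈ Cube.boundary ι) :
    ‖cubeToBall y‖ = 1 := by
  obtain ⟨i, hi⟩ := hy
  refine (norm_cubeToBall_le_one y).antisymm (le_trans ?_ (norm_le_pi_norm (cubeToBall y) i))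
  obtain hi | hi := hi <;> norm_num [cubeToBall, hi]

theorem ballToCube_mem_boundary [Nonempty ι] {x : ι → ℝ} (hx : ‖x‖ = 1) :
    ballToCube x ∈ Cube.boundary ι := by
  obtain ⟨i, hi : |x i| = ‖x‖⟩ := (IsGreatest.pi_norm x).1
  refine ⟨i, (eq_or_eq_neg_of_abs_eq (hi.trans hx)).symm.imp (fun h => ?_) fun h => ?_⟩
  · exact Set.projIcc_of_le_left _ (by norm_num [h])
  · exact Set.projIcc_of_right_le _ (by norm_num [h])

theorem exists_cube_extension [Nonempty ι]
    (hX : ∀ g : C(Metric.sphere (0 : ι → ℝ) 1, X), g.Nullhomotopic) (b : C(Cube.boundary ι, X)) :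
    ∃ F : C(ι → I, X), ∀ y : Cube.boundary ι, F y = b y := by
  let toBoundary : C(Metric.sphere (0 : ι → ℝ) 1, Cube.boundary ι) :=
    ⟨fun s => ⟨ballToCube s, ballToCube_mem_boundary (mem_sphere_zero_iff_norm.1 s.2)⟩,
      (continuous_ballToCube.comp continuous_subtype_val).subtype_mk _⟩
  obtain ⟨F, hF⟩ := exists_closedBall_extension (hX (b.comp toBoundary))
  refine ⟨⟨fun y => F ⟨cubeToBall y, mem_closedBall_zero_iff.2 (norm_cubeToBall_le_one y)⟩, ?_⟩,
    fun y => ?_⟩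
  · refine F.continuous.comp (Continuous.subtype_mk ?_ _)
    unfold cubeToBall
    fun_prop
  · refine (hF ⟨cubeToBall y, mem_sphere_zero_iff_norm.2
      (norm_cubeToBall_of_mem_boundary y.2)⟩).trans (congrArg b (Subtype.ext ?_))
    exact ballToCube_cubeToBall y.1

end Cube

variable {j : ℕ} {x : X}

theorem tail_mem_boundary {y : Fin (j + 1) → I} (hy : y ∈ Cube.boundary (Fin (j + 1)))
    (h0 : y 0 ≠ 0) (h1 : y 0 ≠ 1) : Fin.tail y ∈ Cube.boundary (Fin j) := by
  obtain ⟨i, hi⟩ := hy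
  cases i using Fin.cases with
  | zero => exact (hi.elim h0 h1).elim
  | succ i => exact ⟨i, hi⟩

/-- The map on the boundary of `I × Iʲ` which a homotopy from the constant loop to `f`, relative to
the boundary of `Iʲ`, has to extend: it is `f` on the top face and constant elsewhere. Cutting at
height `1 / 2` instead of `1` is harmless and makes continuity easy. -/
def homotopyBoundary (f : GenLoop (Fin j) X x) : C(Cube.boundary (Fin (j + 1)), X) where
  toFun y := if (y.1 0 : ℝ) ≤ 1 / 2 then x else f (Fin.tail y.1)
  continuous_toFun := by
    have hcoord (i) : Continuous fun y : Cube.boundary (Fin (j + 1)) => y.1 i :=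
      (continuous_apply i).comp continuous_subtype_val
    refine Continuous.if_le continuous_const ?_ (continuous_subtype_val.comp (hcoord 0))
      continuous_const fun y hy => ?_
    · exact f.1.continuous.comp (continuous_pi fun i => hcoord i.succ)
    · refine (f.2 _ (tail_mem_boundary y.2 (fun h => ?_) fun h => ?_)).symm <;> norm_num [h] at hy

theorem homotopic_const_of_nullhomotopic (hX : ∀ g : C(CubeSphere j, X), g.Nullhomotopic)
    (f : GenLoop (Fin j) X x) : GenLoop.Homotopic GenLoop.const f := by
  obtain ⟨F, hF⟩ := exists_cube_extension hX (homotopyBoundary f)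
  have hF' (t : I) (y : Fin j → I) (h : Fin.cons t y ∈ Cube.boundary (Fin (j + 1))) :
      F (Fin.cons t y) = if (t : ℝ) ≤ 1 / 2 then x else f y := hF ⟨_, h⟩
  refine ⟨⟨⟨⟨fun q => F (Fin.cons q.1 q.2), by fun_prop⟩, fun y => ?_, fun y => ?_⟩,
    fun t y hy => ?_⟩⟩
  · exact (hF' 0 y ⟨0, Or.inl rfl⟩).trans (by norm_num)
  · exact (hF' 1 y ⟨0, Or.inr rfl⟩).trans (by norm_num)
  · obtain ⟨i, hi⟩ := id hy
    have hfy : f y = x := f.2 y hy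
    exact (hF' t y ⟨i.succ, hi⟩).trans (by simp [hfy])

theorem subsingleton_homotopyGroup (hX : ∀ g : C(CubeSphere j, X), g.Nullhomotopic) (x : X) :
    Subsingleton (HomotopyGroup (Fin j) X x) := by
  refine ⟨fun a b => ?_⟩
  induction a, b using Quotient.inductionOn₂ with | _ f f' =>
  exact Quotient.sound ((homotopic_const_of_nullhomotopic hX f).symm.trans
    (homotopic_const_of_nullhomotopic hX f'))

end HomotopyGroups

/-- **Forman's theorem** (discrete Morse theory; Theorem `ThmWedge`, second part).
Let `D` be a discrete vector field on a finite simplicial complex `K` (a matching on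
the Hasse diagram pairing simplices with cofacets, each simplex in at most one pair,
the empty simplex unmatched) with no closed gradient paths. If `D` has exactly one
critical (unmatched) `0`-simplex and all other critical simplices have dimension
`≥ N`, then (the geometric realization of) `K` is `(N-1)`-connected. -/
theorem forman_connectivity (n N : ℕ) (hN : 1 ≤ N)
    (K : Set (Finset (Fin n)))
    (hdown : ∀ σ ∈ K, ∀ τ, τ ⊆ σ → τ ∈ K)
    (D : Set (Finset (Fin n) × Finset (Fin n)))
    -- `D` pairs a simplex with a cofacet; the empty simplex is unmatched
    (hDmem : ∀ q ∈ D, q.1 ∈ K ∧ q.2 ∈ K ∧ q.1 ⊆ q.2 ∧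
      q.2.card = q.1.card + 1 ∧ q.1 ≠ ∅)
    -- each simplex participates in at most one pair
    (hD1 : ∀ α β β', (α, β) ∈ D → (α, β') ∈ D → β = β')
    (hD2 : ∀ α α' β, (α, β) ∈ D → (α', β) ∈ D → α = α')
    (hD3 : ∀ α β γ, (α, β) ∈ D → (β, γ) ∈ D → False)
    -- acyclicity: no closed gradient path
    (hacyclic : ¬ ∃ (m : ℕ) (a b : ℕ → Finset (Fin n)), 0 < m ∧
      (∀ i < m, (a i, b i) ∈ D ∧ a (i + 1) ⊆ b i ∧
        (a (i + 1)).card + 1 = (b i).card ∧ a (i + 1) ≠ a i) ∧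
      a m = a 0)
    -- exactly one critical `0`-simplex …
    (σ₀ : Finset (Fin n)) (hσ₀ : σ₀ ∈ K) (hσ₀card : σ₀.card = 1)
    (hσ₀crit : ∀ β, (σ₀, β) ∉ D ∧ (β, σ₀) ∉ D)
    -- … and every other critical simplex has dimension `≥ N`
    (hcrit : ∀ σ ∈ K, σ ≠ ∅ → σ ≠ σ₀ → (∀ β, (σ, β) ∉ D ∧ (β, σ) ∉ D) →
      N + 1 ≤ σ.card) :
    -- conclusion: the realization of `K` is `(N-1)`-connected
    Nonempty (realization n K) ∧
    ∀ j < N, ∀ x : realization n K,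
      Subsingleton (HomotopyGroup (Fin j) (realization n K) x) := by
  obtain ⟨v, rfl⟩ := Finset.card_eq_one.1 hσ₀card
  have hK : IsLowerSet K := fun σ τ hτσ hσ => hdown σ hσ τ hτσ
  have hD : IsGradientVectorField K D := ⟨hDmem, hD1, hD2, hD3, hacyclic⟩
  have hred : ReducesToPoint N K := hD.reducesToPoint K.toFinite hK hσ₀ hσ₀crit hcrit
  have hv : Pi.single v 1 ∈ realization n K :=
    realization_mono (hK.Iic_subset hσ₀) (realization_Iic_singleton v ▸ rfl)
  exact ⟨⟨⟨_, hv⟩⟩, fun j hj => subsingleton_homotopyGroup (hred.nullhomotopic hK hj)⟩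
end
end

section
/- Let K be the complete multipartite complex K_{3,3,3} = [3]*[3]*[3] and let f : K → R^2 be continuous and admit a factorization f = g ∘ α where α : K_{3,3,3} → K_{2,2,2} is the simplicial map induced by surjections [3] → [2] on each color class and g : K_{2,2,2} → R^2 is continuous. Then there exist three pairwise vertex-disjoint triangles Δ_1, Δ_2, Δ_3 in K (each with one vertex of each color) such that f(Δ_1) ∩ f(Δ_2) ∩ f(Δ_3) ≠ ∅. -/
open scoped Classical

noncomputable section

/-- The geometric realization of the complete multipartite complex
`K_{3,3,3} = [3]*[3]*[3]` (the rainbow simplices): vertices are pairs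
`(color, index) ∈ Fin 3 × Fin 3`, and a point of the standard simplex lies in the
realization iff its support contains at most one vertex of each color. -/
def K333 : Set ((Fin 3 × Fin 3) → ℝ) :=
  {x ∈ stdSimplex ℝ (Fin 3 × Fin 3) |
    ∀ c : Fin 3, (Finset.univ.filter fun v => x v ≠ 0 ∧ v.1 = c).card ≤ 1}

/-- Likewise the realization of `K_{2,2,2}`, with vertices `Fin 3 × Fin 2`. -/
def K222 : Set ((Fin 3 × Fin 2) → ℝ) :=
  {x ∈ stdSimplex ℝ (Fin 3 × Fin 2) |
    ∀ c : Fin 3, (Finset.univ.filter fun v => x v ≠ 0 ∧ v.1 = c).card ≤ 1}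

/-- The affine (simplicial) map `K_{3,3,3} → K_{2,2,2}` induced by the vertex
surjections `q c : [3] → [2]` on each color class. -/
def inducedMap (q : Fin 3 → Fin 3 → Fin 2) (x : (Fin 3 × Fin 3) → ℝ) :
    (Fin 3 × Fin 2) → ℝ :=
  fun w => ∑ i : Fin 3, if q w.1 i = w.2 then x (w.1, i) else 0

/-- The geometric triangle of `K_{3,3,3}` spanned by the rainbow vertex set
`{(c, v c) : c ∈ Fin 3}`. -/
def triangleFace (v : Fin 3 → Fin 3) : Set ((Fin 3 × Fin 3) → ℝ) :=
  {x ∈ stdSimplex ℝ (Fin 3 × Fin 3) | ∀ w, x w ≠ 0 → w.2 = v w.1}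

/-!
The join of three copies of `S⁰` is an octahedral sphere, and `f` descends to it: colour by colour,
`q` identifies two of the three vertices, which become the vertex `-c`, while the third one becomes
`+c`. Three faces of the octahedron lift to pairwise disjoint triangles of `K333` as soon as each
`+c` belongs to exactly one of them, so three such faces with intersecting images are needed.

By compactness one may replace the map on the sphere by a lattice-valued map on the vertices of a
fine subdivision. Suppose that no three faces as above meet. Then each lattice point misses the
image of one of the faces `{i}`, and the image of the face `∅` meets neither that of `univ` nor the
intersection of those of `{i}` and `{i}ᶜ`. A point in some `{i}` can be labelled by a colour `c`
such that it misses `{c}` but lies in `{c - 1}`. Hence the boundary of the face `∅` is labelled as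
in Sperner's lemma, whatever the other labels, and `∅` covers some rainbow triangle with odd degree.
The sphere has total degree zero in the plane, and neither `univ` nor any `{i}` covers that
triangle, so some `{j}ᶜ` does. The labels outside all `{i}` are chosen to name such a `j`. This can
be done pointwise, as `{j}ᶜ` has constant degree near a point outside `univ` and all `{i}`, which
contain the boundary of `{j}ᶜ`. But then a vertex of the triangle with the label `j + 1` cannot lie
outside all `{i}`, so it lies in `{j}`, and also in `∅` and `{j}ᶜ`: a contradiction.
-/

namespace ColoredTverberg

open Finset

section Grid

/-- Indices of the small triangles in the edgewise subdivision of a triangle into rows: between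
row `m` and row `m + 1` lie the triangles `⟨m, inl k⟩`, `k ≤ m`, with their apex in row `m`, and
the triangles `⟨m, inr k⟩`, `k < m`, with an edge in row `m`. -/
def gridTriangles (n : ℕ) : Finset ((_ : ℕ) × (ℕ ⊕ ℕ)) :=
  (range n).sigma fun m => (range (m + 1)).disjSum (range m)

/-- The nodes of the subdivision of side length `n`; `(m, k)` is the `k`-th node of row `m`. -/
def gridNodes (n : ℕ) : Set (ℕ × ℕ) :=
  {x | x.1 ≤ n ∧ x.2 ≤ x.1}

/-- The three corners of a small triangle. -/
def gridVertex : (_ : ℕ) × (ℕ ⊕ ℕ) → Fin 3 → ℕ × ℕ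
  | ⟨m, .inl k⟩ => ![(m, k), (m + 1, k), (m + 1, k + 1)]
  | ⟨m, .inr k⟩ => ![(m, k), (m, k + 1), (m + 1, k + 1)]

/-- The `j`-th node on the side of the big triangle on which the barycentric coordinate `c`
vanishes (see `gridPoint`). -/
def gridSide (n : ℕ) (c : Fin 3) (j : ℕ) : ℕ × ℕ :=
  ![(j, 0), (j, j), (n, j)] c

lemma finite_gridNodes (n : ℕ) : (gridNodes n).Finite :=
  (Set.finite_Iic (n, n)).subset fun _ hx => ⟨hx.1, hx.2.trans hx.1⟩

lemma gridVertex_mem_gridNodes {n : ℕ} {T : (_ : ℕ) × (ℕ ⊕ ℕ)} (hT : T ∈ gridTriangles n)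
    (i : Fin 3) : gridVertex T i ∈ gridNodes n := by
  obtain ⟨m, k | k⟩ := T <;> fin_cases i <;>
    simp only [gridTriangles, mem_sigma, mem_range, inl_mem_disjSum, inr_mem_disjSum, gridNodes,
      gridVertex, Fin.zero_eta, Fin.mk_one, Fin.reduceFinMk, Matrix.cons_val,
      Set.mem_ofPred_eq] at hT ⊢ <;> omega

lemma gridSide_mem_gridNodes {n j : ℕ} (hj : j ≤ n) (c : Fin 3) :
    gridSide n c j ∈ gridNodes n := by
  fin_cases c <;> simp [gridNodes, gridSide, hj]

/-- Stokes' formula modulo 2: the interior edges cancel in pairs. -/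
lemma sum_gridTriangles_edges {R : Type*} [CommRing R] [CharP R 2] (n : ℕ)
    (β : Sym2 (ℕ × ℕ) → R) :
    ∑ T ∈ gridTriangles n, ∑ i, β s(gridVertex T i, gridVertex T (i + 1)) =
      ∑ c, ∑ j ∈ range n, β s(gridSide n c j, gridSide n c (j + 1)) := by
  have two_eq_zero : (2 : R) = 0 := CharTwo.two_eq_zero
  simp only [gridTriangles, sum_sigma, sum_disjSum, Fin.sum_univ_three, gridVertex, gridSide,
    Fin.isValue, Matrix.cons_val, Fin.reduceAdd]
  induction n with
  | zero => simp
  | succ n ih =>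
    rw [sum_range_succ, ih]
    simp only [sum_add_distrib]
    have left_side : ∑ k ∈ range (n + 1), β s((n, k), (n + 1, k)) =
        ∑ k ∈ range n, β s((n, k + 1), (n + 1, k + 1)) + β s((n, 0), (n + 1, 0)) :=
      sum_range_succ' _ n
    have right_side : ∑ k ∈ range (n + 1), β s((n + 1, k + 1), (n, k)) =
        ∑ k ∈ range n, β s((n + 1, k + 1), (n, k)) + β s((n, n), (n + 1, n + 1)) := by
      rw [sum_range_succ, Sym2.eq_swap (a := (n, n))]
    rw [left_side, right_side, sum_range_succ (fun m => β s((m, 0), (m + 1, 0))),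
      sum_range_succ (fun m => β s((m, m), (m + 1, m + 1)))]
    linear_combination (∑ k ∈ range n, β s((n, k + 1), (n + 1, k + 1)) +
      ∑ k ∈ range n, β s((n, k), (n, k + 1)) +
      ∑ k ∈ range n, β s((n + 1, k + 1), (n, k))) * two_eq_zero

end Grid

section Degree

variable {P Q : Type*} [DecidableEq P] [DecidableEq Q]

/-- The vertex set of the image of a small triangle under a map on nodes. -/
def cell (H : ℕ × ℕ → P) (T : (_ : ℕ) × (ℕ ⊕ ℕ)) : Finset P :=
  univ.image fun i => H (gridVertex T i)

/-- The degree modulo 2 of `H` over `τ`: the number of small triangles that `H` maps onto `τ`. -/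
def degree (n : ℕ) (H : ℕ × ℕ → P) (τ : Finset P) : ZMod 2 :=
  #{T ∈ gridTriangles n | cell H T = τ}

/-- The number modulo 2 of boundary edges of the subdivision that `H` maps onto `e`. -/
def boundaryDegree (n : ℕ) (H : ℕ × ℕ → P) (e : Sym2 P) : ZMod 2 :=
  ∑ c, (#{j ∈ range n | s(H (gridSide n c j), H (gridSide n c (j + 1))) = e} : ZMod 2)

lemma exists_cell_eq_of_degree_ne_zero {n : ℕ} {H : ℕ × ℕ → P} {τ : Finset P}
    (h : degree n H τ ≠ 0) : ∃ T ∈ gridTriangles n, cell H T = τ := by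
  contrapose! h
  rw [degree, filter_false_of_mem h, card_empty, Nat.cast_zero]

lemma subset_image_of_degree_ne_zero {n : ℕ} {H : ℕ × ℕ → P} {τ : Finset P}
    (h : degree n H τ ≠ 0) : ↑τ ⊆ H '' gridNodes n := by
  obtain ⟨T, hT, rfl⟩ := exists_cell_eq_of_degree_ne_zero h
  intro p hp
  obtain ⟨i, -, rfl⟩ := mem_image.1 hp
  exact Set.mem_image_of_mem H (gridVertex_mem_gridNodes hT i)

lemma exists_image_eq_degree_ne_zero {n : ℕ} {H : ℕ × ℕ → P} (l : P → Q) {σ : Finset Q}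
    (h : degree n (l ∘ H) σ ≠ 0) : ∃ τ, τ.image l = σ ∧ degree n H τ ≠ 0 := by
  have cell_comp : ∀ T, cell (l ∘ H) T = (cell H T).image l := fun T => image_image.symm
  rw [degree, card_eq_sum_card_image (cell H), Nat.cast_sum] at h
  obtain ⟨τ, hτ, hdeg⟩ := exists_ne_zero_of_sum_ne_zero h
  obtain ⟨T, hT, rfl⟩ := mem_image.1 hτ
  have hσ : (cell H T).image l = σ := by rw [← cell_comp, (mem_filter.1 hT).2]
  refine ⟨cell H T, hσ, ?_⟩
  rw [filter_filter] at hdeg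
  convert hdeg using 4 with T'
  rw [degree]
  congr! 3 with T' -
  exact ⟨fun h' => ⟨by rw [cell_comp, h', hσ], h'⟩, And.right⟩

/-- A triangle with exactly two distinct vertices covers its edge twice. -/
lemma sum_edges_eq_ite (u : Fin 3 → P) {a b : P} (hab : a ≠ b) :
    ∑ i, (if s(u i, u (i + 1)) = s(a, b) then (1 : ZMod 2) else 0) =
      if {a, b} ⊆ univ.image u ∧ #(univ.image u) = 3 then 1 else 0 := by
  have image_eq : univ.image u = {u 0, u 1, u 2} := by ext; simp [Fin.exists_fin_succ, eq_comm]
  simp only [image_eq, Fin.sum_univ_three, insert_subset_iff, singleton_subset_iff,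
    card_insert_eq_ite, card_singleton, mem_insert, mem_singleton, Fin.isValue, Fin.reduceAdd,
    Sym2.eq_iff]
  grind

lemma boundaryDegree_eq_card {n : ℕ} {H : ℕ × ℕ → P} {a b : P} (hab : a ≠ b) :
    boundaryDegree n H s(a, b) =
      #{T ∈ gridTriangles n | {a, b} ⊆ cell H T ∧ #(cell H T) = 3} := by
  simp_rw [boundaryDegree, ← sum_boole]
  refine Eq.trans ?_ (sum_congr rfl fun T _ => sum_edges_eq_ite (fun i => H (gridVertex T i)) hab)
  exact (sum_gridTriangles_edges n fun e => if e.map H = s(a, b) then (1 : ZMod 2) else 0).symm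

lemma card_filter_edge_eq {a : ℕ → P} {x y : P} (hxy : x ≠ y) {n : ℕ}
    (ha : ∀ j ≤ n, a j = x ∨ a j = y) :
    (#{j ∈ range n | s(a j, a (j + 1)) = s(x, y)} : ZMod 2) =
      (if a n = x then 1 else 0) - if a 0 = x then 1 else 0 := by
  have edge_eq : ∀ j ∈ range n, (if s(a j, a (j + 1)) = s(x, y) then (1 : ZMod 2) else 0) =
      (if a (j + 1) = x then 1 else 0) - if a j = x then 1 else 0 := by
    intro j hj
    rw [mem_range] at hj
    have neg_one : (-1 : ZMod 2) = 1 := by decide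
    rcases ha j hj.le with h | h <;> rcases ha (j + 1) hj with h' | h' <;>
      simp [h, h', hxy, hxy.symm, neg_one]
  rw [← sum_boole, sum_congr rfl edge_eq]
  exact sum_range_sub (fun j => if a j = x then (1 : ZMod 2) else 0) n

lemma boundaryDegree_eq_zero {n : ℕ} {H : ℕ × ℕ → P} {p : P}
    (hp : ∀ c, ∀ j ≤ n, H (gridSide n c j) ≠ p) (p' : P) : boundaryDegree n H s(p, p') = 0 := by
  refine sum_eq_zero fun c _ => ?_
  rw [filter_false_of_mem, card_empty, Nat.cast_zero]
  intro j hj he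
  rw [mem_range] at hj
  rcases Sym2.eq_iff.1 he with he | he
  · exact hp c j hj.le he.1
  · exact hp c (j + 1) hj he.2

lemma boundaryDegree_eq_one {n : ℕ} {L : ℕ × ℕ → Fin 3}
    (hL : ∀ c, ∀ j ≤ n, L (gridSide n c j) ≠ c) : boundaryDegree n L s(1, 0) = 1 := by
  have first_label : L (gridSide n 2 0) = 1 := by
    have h₀ := hL 0 n le_rfl
    have h₂ := hL 2 0 n.zero_le
    simp only [gridSide, Matrix.cons_val] at h₀ h₂ ⊢
    omega
  have last_label : L (gridSide n 2 n) = 0 := by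
    have h₁ := hL 1 n le_rfl
    have h₂ := hL 2 n le_rfl
    simp only [gridSide, Matrix.cons_val] at h₁ h₂ ⊢
    omega
  have no_edge : ∀ c : Fin 3, c ≠ 2 →
      #{j ∈ range n | s(L (gridSide n c j), L (gridSide n c (j + 1))) = s(1, 0)} = 0 := by
    intro c hc
    refine card_eq_zero.2 (filter_false_of_mem fun j hj h => ?_)
    rw [mem_range] at hj
    have h₁ := hL c j hj.le
    have h₂ := hL c (j + 1) hj
    rw [Sym2.eq_iff] at h
    omega
  rw [boundaryDegree, Fin.sum_univ_three, no_edge 0 (by decide), no_edge 1 (by decide),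
    card_filter_edge_eq (by decide), first_label, last_label]
  · decide
  · intro j hj
    have := hL 2 j hj
    omega

lemma degree_univ_eq_one_of_sperner {n : ℕ} {L : ℕ × ℕ → Fin 3}
    (hL : ∀ c, ∀ j ≤ n, L (gridSide n c j) ≠ c) : degree n L univ = 1 := by
  rw [← boundaryDegree_eq_one hL, boundaryDegree_eq_card (by decide), degree]
  congr! 3 with T -
  rw [← card_eq_iff_eq_univ, Fintype.card_fin]
  refine ⟨fun h => ⟨?_, h⟩, And.right⟩
  rw [(card_eq_iff_eq_univ (cell L T)).1 h]
  exact subset_univ _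

end Degree

section Lattice

/-- Adjacency or equality in the triangular lattice, in coordinates `ℤ × ℤ` in which the small
triangles are `{p, p + (1, 0), p + (1, 1)}` and `{p, p + (0, 1), p + (1, 1)}`. -/
def HexAdj (u v : ℤ × ℤ) : Prop :=
  |v.1 - u.1| ≤ 1 ∧ |v.2 - u.2| ≤ 1 ∧ |(v.1 - u.1) - (v.2 - u.2)| ≤ 1

/-- The six neighbours of the origin of the triangular lattice, in cyclic order. -/
def hexDir : Fin 6 → ℤ × ℤ :=
  ![(1, 0), (1, 1), (0, 1), (-1, 0), (-1, -1), (0, -1)]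

/-- A small triangle of the triangular lattice, given by its vertex set. -/
def IsTriangle (τ : Finset (ℤ × ℤ)) : Prop :=
  #τ = 3 ∧ ∀ u ∈ τ, ∀ v ∈ τ, HexAdj u v

/-- The `i`-th of the six triangles around `p`. -/
def hexStar (p : ℤ × ℤ) (i : Fin 6) : Finset (ℤ × ℤ) :=
  {p, p + hexDir i, p + hexDir (i + 1)}

lemma hexDir_injective : Function.Injective hexDir := by decide

lemma hexDir_ne_zero : ∀ i, hexDir i ≠ 0 := by decide

lemma hexAdj_iff {u v : ℤ × ℤ} : HexAdj u v ↔ v = u ∨ ∃ i, v = u + hexDir i := by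
  simp only [HexAdj, abs_le, hexDir, Fin.exists_fin_succ, Prod.ext_iff, Prod.fst_add, Prod.snd_add,
    Matrix.cons_val_zero, Matrix.cons_val_succ, IsEmpty.exists_iff, or_false]
  omega

lemma hexAdj_hexDir_iff {p : ℤ × ℤ} {i j : Fin 6} :
    HexAdj (p + hexDir i) (p + hexDir j) ↔ j = i ∨ j = i + 1 ∨ i = j + 1 := by
  simp only [HexAdj, Prod.fst_add, Prod.snd_add, add_sub_add_left_eq_sub]
  revert i j
  decide

lemma card_hexStar (p : ℤ × ℤ) (i : Fin 6) : #(hexStar p i) = 3 :=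
  card_eq_three.2 ⟨p, p + hexDir i, p + hexDir (i + 1), by simp [hexDir_ne_zero],
    by simp [hexDir_ne_zero], by simp [hexDir_injective.eq_iff], rfl⟩

lemma isTriangle_hexStar (p : ℤ × ℤ) (i : Fin 6) : IsTriangle (hexStar p i) := by
  refine ⟨card_hexStar p i, ?_⟩
  simp only [hexStar, mem_insert, mem_singleton, forall_eq_or_imp, forall_eq, HexAdj, Prod.fst_add,
    Prod.snd_add, sub_self, add_sub_cancel_left, sub_add_cancel_left, add_sub_add_left_eq_sub]
  revert i
  decide

lemma IsTriangle.exists_eq_hexStar {τ : Finset (ℤ × ℤ)} (hτ : IsTriangle τ) {p : ℤ × ℤ}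
    (hp : p ∈ τ) : ∃ i, τ = hexStar p i := by
  obtain ⟨u, v, huv, hτp⟩ := card_eq_two.1 ((card_erase_of_mem hp).trans (by rw [hτ.1]))
  obtain rfl : τ = {p, u, v} := by rw [← insert_erase hp, hτp]
  have mem_erase : ∀ x ∈ ({u, v} : Finset (ℤ × ℤ)), x ≠ p := fun x hx => by
    rw [← hτp] at hx
    exact ne_of_mem_erase hx
  obtain ⟨i, rfl⟩ := (hexAdj_iff.1 (hτ.2 p hp u (by simp))).resolve_left (mem_erase u (by simp))
  obtain ⟨j, rfl⟩ := (hexAdj_iff.1 (hτ.2 p hp v (by simp))).resolve_left (mem_erase v (by simp))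
  rcases hexAdj_hexDir_iff.1 (hτ.2 (p + hexDir i) (by simp) (p + hexDir j) (by simp)) with
    rfl | rfl | rfl
  · exact absurd rfl huv
  · exact ⟨i, rfl⟩
  · exact ⟨j, by rw [hexStar, pair_comm]⟩

lemma hexDir_mem_hexStar_iff {p : ℤ × ℤ} {i k : Fin 6} :
    p + hexDir i ∈ hexStar p k ↔ i = k ∨ i = k + 1 := by
  simp [hexStar, hexDir_ne_zero, hexDir_injective.eq_iff]

end Lattice

section Simplicial

/-- A map from grid nodes to the triangular lattice that sends each small triangle to a (possibly
degenerate) small triangle. -/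
def IsSimplicial (n : ℕ) (H : ℕ × ℕ → ℤ × ℤ) : Prop :=
  ∀ T ∈ gridTriangles n, ∀ i j, HexAdj (H (gridVertex T i)) (H (gridVertex T j))

variable {n : ℕ} {H : ℕ × ℕ → ℤ × ℤ}

lemma IsSimplicial.isTriangle_cell (hH : IsSimplicial n H) {T : (_ : ℕ) × (ℕ ⊕ ℕ)}
    (hT : T ∈ gridTriangles n) (hcard : #(cell H T) = 3) : IsTriangle (cell H T) := by
  refine ⟨hcard, ?_⟩
  simpa [cell] using hH T hT

lemma IsSimplicial.isTriangle (hH : IsSimplicial n H) {τ : Finset (ℤ × ℤ)} (hcard : #τ = 3)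
    (hdeg : degree n H τ ≠ 0) : IsTriangle τ := by
  obtain ⟨T, hT, rfl⟩ := exists_cell_eq_of_degree_ne_zero hdeg
  exact hH.isTriangle_cell hT hcard

lemma IsSimplicial.degree_hexStar_add (hH : IsSimplicial n H) (p : ℤ × ℤ) (i : Fin 6) :
    degree n H (hexStar p i) + degree n H (hexStar p (i + 1)) =
      boundaryDegree n H s(p, p + hexDir (i + 1)) := by
  have hexStar_ne : hexStar p i ≠ hexStar p (i + 1) := by
    intro h
    have mem : p + hexDir i ∈ hexStar p (i + 1) := h ▸ hexDir_mem_hexStar_iff.2 (.inl rfl)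
    rw [hexDir_mem_hexStar_iff] at mem
    omega
  have cell_iff : ∀ T ∈ gridTriangles n, {p, p + hexDir (i + 1)} ⊆ cell H T ∧ #(cell H T) = 3 ↔
      cell H T = hexStar p i ∨ cell H T = hexStar p (i + 1) := by
    intro T hT
    constructor
    · rintro ⟨hsub, hcard⟩
      simp only [insert_subset_iff, singleton_subset_iff] at hsub
      obtain ⟨k, hk⟩ := (hH.isTriangle_cell hT hcard).exists_eq_hexStar hsub.1
      rw [hk, hexDir_mem_hexStar_iff] at hsub
      rcases hsub.2 with h | h
      · exact .inr (h ▸ hk)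
      · exact .inl (add_right_cancel h ▸ hk)
    · rintro (h | h) <;> rw [h] <;> exact ⟨by simp [insert_subset_iff, hexStar], card_hexStar ..⟩
  rw [boundaryDegree_eq_card (by simp [hexDir_ne_zero]), filter_congr cell_iff, filter_or,
    card_union_of_disjoint, Nat.cast_add]
  · rfl
  · exact disjoint_filter.2 fun T _ h h' => hexStar_ne (h.symm.trans h')

end Simplicial

lemma eq_of_mem_of_forall_hexStar_eq {α : Type*} {F : Finset (ℤ × ℤ) → α} {p : ℤ × ℤ}
    (hF : ∀ i, F (hexStar p i) = F (hexStar p (i + 1))) {τ τ' : Finset (ℤ × ℤ)}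
    (hτ : IsTriangle τ) (hp : p ∈ τ) (hτ' : IsTriangle τ') (hp' : p ∈ τ') : F τ = F τ' := by
  have eq_zero : ∀ i, F (hexStar p i) = F (hexStar p 0) := by
    intro i
    induction i using Fin.induction with
    | zero => rfl
    | succ i ih => rw [← ih, hF i.castSucc, Fin.coeSucc_eq_succ]
  obtain ⟨i, rfl⟩ := hτ.exists_eq_hexStar hp
  obtain ⟨i', rfl⟩ := hτ'.exists_eq_hexStar hp'
  rw [eq_zero, eq_zero i']

/-- Translating `τ` along a ray moves it out of the finite set `A` without changing `F τ`. -/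
lemma eq_zero_of_forall_hexStar_eq {M : Type*} [Zero M] {F : Finset (ℤ × ℤ) → M}
    (hF : ∀ p i, F (hexStar p i) = F (hexStar p (i + 1))) {A : Set (ℤ × ℤ)} (hA : A.Finite)
    (hsupp : ∀ τ : Finset (ℤ × ℤ), F τ ≠ 0 → ↑τ ⊆ A) {τ : Finset (ℤ × ℤ)} (hτ : IsTriangle τ) :
    F τ = 0 := by
  have shift : ∀ (p : ℤ × ℤ) (k : ℕ), F (hexStar p 0) = F (hexStar (p + k • hexDir 0) 0) := by
    intro p k
    induction k with
    | zero => simp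
    | succ k ih =>
      rw [ih, succ_nsmul, ← add_assoc]
      exact eq_of_mem_of_forall_hexStar_eq (hF (p + k • hexDir 0 + hexDir 0))
        (isTriangle_hexStar _ 0) (by simp [hexStar]) (isTriangle_hexStar _ 0) (by simp [hexStar])
  obtain ⟨p, hp⟩ : τ.Nonempty := card_pos.1 (by rw [hτ.1]; norm_num)
  have injective_ray : Function.Injective fun k : ℕ => p + k • hexDir 0 := fun k l h => by
    simpa [hexDir] using h
  obtain ⟨k, hk⟩ := (hA.preimage injective_ray.injOn).exists_notMem
  rw [eq_of_mem_of_forall_hexStar_eq (hF p) hτ hp (isTriangle_hexStar p 0) (by simp [hexStar]),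
    shift p k]
  by_contra h
  exact hk (hsupp _ h (by simp [hexStar]))

section Octahedron

/-- Lattice maps on the eight faces of a subdivided octahedron. The vertices of the octahedron are
`±c` for a colour `c : Fin 3`, and the face `s` has the vertices `+c` for `c ∈ s` and `-c` for
`c ∉ s`, so that `s` and `insert c s` share the side opposite to colour `c`. -/
structure IsOctahedralMap (n : ℕ) (h : Finset (Fin 3) → ℕ × ℕ → ℤ × ℤ) : Prop where
  glue : ∀ c s, ∀ j ≤ n, h (insert c s) (gridSide n c j) = h s (gridSide n c j)
  simplicial : ∀ s, IsSimplicial n (h s)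

/-- Three faces of the octahedron such that each `+c` is a vertex of exactly one of them. -/
def IsExactCover (S : Fin 3 → Finset (Fin 3)) : Prop :=
  ∀ c, ∃! t, c ∈ S t

/-- The nodes in the image of the face `s`. -/
def faceImage (n : ℕ) (h : Finset (Fin 3) → ℕ × ℕ → ℤ × ℤ) (s : Finset (Fin 3)) : Set (ℤ × ℤ) :=
  h s '' gridNodes n

/-- The Sperner labelling of the lattice. A point in the image of some `{i}` is labelled by a `c`
whose face `{c}` misses it, if there is one; any other point by an `i` for which `{i}ᶜ` covers the
first triangle around the point with odd degree, if there is one. -/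
def label (n : ℕ) (h : Finset (Fin 3) → ℕ × ℕ → ℤ × ℤ) (p : ℤ × ℤ) : Fin 3 :=
  if ∃ i, p ∈ faceImage n h {i} then
    Classical.epsilon fun c => p ∉ faceImage n h {c} ∧ p ∈ faceImage n h {c - 1}
  else Classical.epsilon fun i => degree n (h {i}ᶜ) (hexStar p 0) ≠ 0

variable {n : ℕ} {h : Finset (Fin 3) → ℕ × ℕ → ℤ × ℤ}

lemma IsOctahedralMap.sum_boundaryDegree (hh : IsOctahedralMap n h) (e : Sym2 (ℤ × ℤ)) :
    ∑ s, boundaryDegree n (h s) e = 0 := by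
  simp only [boundaryDegree]
  rw [sum_comm]
  refine sum_eq_zero fun c _ => ?_
  rw [← powerset_univ, ← insert_compl_self c, sum_powerset_insert (by simp), ← sum_add_distrib]
  refine sum_eq_zero fun s _ => ?_
  rw [filter_congr (s := range n) (q := fun j =>
    s(h (insert c s) (gridSide n c j), h (insert c s) (gridSide n c (j + 1))) = e)]
  · exact CharTwo.add_self_eq_zero _
  · intro j hj
    rw [mem_range] at hj
    rw [hh.glue c s j hj.le, hh.glue c s (j + 1) hj]

lemma IsOctahedralMap.sum_degree (hh : IsOctahedralMap n h) {τ : Finset (ℤ × ℤ)}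
    (hτ : IsTriangle τ) : ∑ s, degree n (h s) τ = 0 := by
  have finite_image : (⋃ s, faceImage n h s).Finite :=
    Set.finite_iUnion fun s => (finite_gridNodes n).image (h s)
  refine eq_zero_of_forall_hexStar_eq (F := fun τ => ∑ s, degree n (h s) τ) (fun p i => ?_)
    finite_image (fun σ hσ => ?_) hτ
  · rw [← CharTwo.add_eq_zero, ← sum_add_distrib]
    simp only [(hh.simplicial _).degree_hexStar_add, hh.sum_boundaryDegree]
  · obtain ⟨s, -, hs⟩ := exists_ne_zero_of_sum_ne_zero hσ
    exact (subset_image_of_degree_ne_zero hs).trans (Set.subset_iUnion (faceImage n h) s)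

lemma IsOctahedralMap.gridSide_compl_ne (hh : IsOctahedralMap n h) {p : ℤ × ℤ}
    (huniv : p ∉ faceImage n h univ) (hsingle : ∀ k, p ∉ faceImage n h {k}) (i c : Fin 3) {j : ℕ}
    (hj : j ≤ n) : h {i}ᶜ (gridSide n c j) ≠ p := by
  have compl_eq_insert : ∀ i c : Fin 3, c ≠ i → ∃ k, ({i}ᶜ : Finset (Fin 3)) = insert c {k} := by
    decide
  rintro rfl
  obtain rfl | hci := eq_or_ne c i
  · rw [← hh.glue c _ j hj, insert_compl_self] at huniv
    exact huniv (Set.mem_image_of_mem _ (gridSide_mem_gridNodes hj c))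
  · obtain ⟨k, hk⟩ := compl_eq_insert i c hci
    rw [hk, hh.glue c _ j hj] at hsingle
    exact hsingle k (Set.mem_image_of_mem _ (gridSide_mem_gridNodes hj c))

lemma IsOctahedralMap.degree_compl_eq (hh : IsOctahedralMap n h) {p : ℤ × ℤ}
    (huniv : p ∉ faceImage n h univ) (hsingle : ∀ k, p ∉ faceImage n h {k}) (i : Fin 3)
    {τ τ' : Finset (ℤ × ℤ)} (hτ : IsTriangle τ) (hp : p ∈ τ) (hτ' : IsTriangle τ') (hp' : p ∈ τ') :
    degree n (h {i}ᶜ) τ = degree n (h {i}ᶜ) τ' := by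
  refine eq_of_mem_of_forall_hexStar_eq (fun k => ?_) hτ hp hτ' hp'
  rw [← CharTwo.add_eq_zero, (hh.simplicial _).degree_hexStar_add]
  exact boundaryDegree_eq_zero (fun c j hj => hh.gridSide_compl_ne huniv hsingle i c hj) _

lemma notMem_faceImage_label {p : ℤ × ℤ} (hmem : ∃ i, p ∈ faceImage n h {i})
    (hnotMem : ∃ i, p ∉ faceImage n h {i}) :
    p ∉ faceImage n h {label n h p} ∧ p ∈ faceImage n h {label n h p - 1} := by
  rw [label, if_pos hmem]
  refine Classical.epsilon_spec (p := fun c => p ∉ faceImage n h {c} ∧ p ∈ faceImage n h {c - 1}) ?_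
  obtain ⟨i, hi⟩ := hmem
  obtain ⟨k, hk⟩ := hnotMem
  by_contra! hstep
  have step : ∀ c, p ∈ faceImage n h {c} → p ∈ faceImage n h {c + 1} := fun c hc => by
    by_contra hc'
    exact hstep _ hc' (by rwa [add_sub_cancel_right])
  have cyclic : ∀ i k : Fin 3, k = i ∨ k = i + 1 ∨ k = i + 1 + 1 := by decide
  rcases cyclic i k with rfl | rfl | rfl
  exacts [hk hi, hk (step _ hi), hk (step _ (step _ hi))]

lemma IsOctahedralMap.exists_image_label_eq_univ (hh : IsOctahedralMap n h)
    (hsingle : ∀ p, ∃ i, p ∉ faceImage n h {i}) :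
    ∃ τ, IsTriangle τ ∧ τ.image (label n h) = univ ∧ degree n (h ∅) τ ≠ 0 := by
  have sperner : degree n (label n h ∘ h ∅) univ = 1 := by
    refine degree_univ_eq_one_of_sperner fun c j hj hc => ?_
    have mem : h ∅ (gridSide n c j) ∈ faceImage n h {c} := by
      rw [← hh.glue c ∅ j hj]
      exact Set.mem_image_of_mem _ (gridSide_mem_gridNodes hj c)
    refine (notMem_faceImage_label ⟨c, mem⟩ (hsingle _)).1 ?_
    rwa [show label n h (h ∅ (gridSide n c j)) = c from hc]
  obtain ⟨τ, hτ, hdeg⟩ := exists_image_eq_degree_ne_zero (label n h) (sperner ▸ one_ne_zero)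
  refine ⟨τ, (hh.simplicial ∅).isTriangle (le_antisymm ?_ ?_) hdeg, hτ, hdeg⟩
  · obtain ⟨T, -, rfl⟩ := exists_cell_eq_of_degree_ne_zero hdeg
    exact card_image_le
  · calc 3 = #(τ.image (label n h)) := by rw [hτ, card_univ, Fintype.card_fin]
      _ ≤ #τ := card_image_le

lemma IsOctahedralMap.exists_degree_compl_ne_zero (hh : IsOctahedralMap n h)
    {τ : Finset (ℤ × ℤ)} (hτ : IsTriangle τ) (hempty : degree n (h ∅) τ ≠ 0)
    (huniv : degree n (h univ) τ = 0) (hsingle : ∀ i, degree n (h {i}) τ = 0) :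
    ∃ i, degree n (h {i}ᶜ) τ ≠ 0 := by
  have faces : ∀ s : Finset (Fin 3), s = ∅ ∨ s = univ ∨ ∃ i, s = {i} ∨ s = {i}ᶜ := by decide
  by_contra! hcompl
  refine hempty ((sum_eq_single ∅ (fun s _ hs => ?_) (by simp)).symm.trans (hh.sum_degree hτ))
  rcases faces s with rfl | rfl | ⟨i, rfl | rfl⟩
  exacts [absurd rfl hs, huniv, hsingle i, hcompl i]

lemma IsOctahedralMap.label_eq_epsilon (hh : IsOctahedralMap n h) {p : ℤ × ℤ}
    (huniv : p ∉ faceImage n h univ) (hsingle : ∀ k, p ∉ faceImage n h {k})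
    {τ : Finset (ℤ × ℤ)} (hτ : IsTriangle τ) (hp : p ∈ τ) :
    label n h p = Classical.epsilon fun i => degree n (h {i}ᶜ) τ ≠ 0 := by
  rw [label, if_neg (not_exists.2 hsingle)]
  congr! 3 with i
  rw [hh.degree_compl_eq huniv hsingle i (isTriangle_hexStar p 0) (by simp [hexStar]) hτ hp]

lemma IsOctahedralMap.exists_degree_compl_ne_zero_of_image_label (hh : IsOctahedralMap n h)
    (hsingle : ∀ p, ∃ i, p ∉ faceImage n h {i})
    (huniv : ∀ p ∈ faceImage n h ∅, p ∉ faceImage n h univ) :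
    ∃ τ, IsTriangle τ ∧ τ.image (label n h) = univ ∧ ↑τ ⊆ faceImage n h ∅ ∧
      ∃ i, degree n (h {i}ᶜ) τ ≠ 0 := by
  obtain ⟨τ, hτ, hlabel, hdeg⟩ := hh.exists_image_label_eq_univ hsingle
  have hempty := subset_image_of_degree_ne_zero hdeg
  have exists_label : ∀ i, ∃ p ∈ τ, label n h p = i := fun i => mem_image.1 (hlabel ▸ mem_univ i)
  refine ⟨τ, hτ, hlabel, hempty, hh.exists_degree_compl_ne_zero hτ hdeg ?_ fun i => ?_⟩
  · by_contra hne
    obtain ⟨p, hp, -⟩ := exists_label 0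
    exact huniv p (hempty hp) (subset_image_of_degree_ne_zero hne hp)
  · by_contra hne
    obtain ⟨p, hp, rfl⟩ := exists_label i
    have hmem := subset_image_of_degree_ne_zero hne hp
    exact (notMem_faceImage_label ⟨_, hmem⟩ (hsingle p)).1 hmem

lemma isExactCover_singleton : IsExactCover fun c => {c} := by
  simp [IsExactCover]

lemma isExactCover_univ : IsExactCover ![univ, ∅, ∅] := by
  simp [IsExactCover, ExistsUnique, Fin.forall_fin_succ]

lemma isExactCover_compl (i : Fin 3) : IsExactCover ![∅, {i}, {i}ᶜ] := by
  intro c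
  by_cases hc : c = i <;>
    simp [hc, ExistsUnique, Fin.forall_fin_succ]

lemma IsOctahedralMap.exists_isExactCover (hh : IsOctahedralMap n h) :
    ∃ S, IsExactCover S ∧ ∃ p, ∀ t, p ∈ faceImage n h (S t) := by
  by_contra! hcover
  have single : ∀ p, ∃ i, p ∉ faceImage n h {i} := hcover _ isExactCover_singleton
  have univ_disjoint : ∀ p ∈ faceImage n h ∅, p ∉ faceImage n h univ := fun p hp hp' => by
    obtain ⟨t, ht⟩ := hcover _ isExactCover_univ p
    fin_cases t
    exacts [ht hp', ht hp, ht hp]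
  have compl_disjoint : ∀ p ∈ faceImage n h ∅, ∀ i, p ∈ faceImage n h {i} →
      p ∉ faceImage n h {i}ᶜ := fun p hp i hi hi' => by
    obtain ⟨t, ht⟩ := hcover _ (isExactCover_compl i) p
    fin_cases t
    exacts [ht hp, ht hi, ht hi']
  obtain ⟨τ, hτ, hlabel, hempty, hex⟩ :=
    hh.exists_degree_compl_ne_zero_of_image_label single univ_disjoint
  have hcompl := Classical.epsilon_spec hex
  set j := Classical.epsilon fun i => degree n (h {i}ᶜ) τ ≠ 0 with hj
  obtain ⟨p, hp, hpj⟩ := mem_image.1 (hlabel ▸ mem_univ (j + 1))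
  by_cases hmem : ∃ i, p ∈ faceImage n h {i}
  · have hpj' := (notMem_faceImage_label hmem (single p)).2
    rw [hpj, add_sub_cancel_right] at hpj'
    exact compl_disjoint p (hempty hp) j hpj' (subset_image_of_degree_ne_zero hcompl hp)
  · rw [hh.label_eq_epsilon (univ_disjoint p (hempty hp)) (not_exists.1 hmem) hτ hp, ← hj] at hpj
    simp at hpj

end Octahedron

section Discretization

/-- Rounding to the triangular lattice: the points rounded to a given lattice point form a
unit square, and the squares are laid like bricks, each row shifted by half a unit against the
previous one, so that touching squares are adjacent in the sense of `HexAdj`. -/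
def hexRound (z : Fin 2 → ℝ) : ℤ × ℤ :=
  (⌊z 0 + ⌊z 1⌋ / 2⌋, ⌊z 1⌋)

/-- The node `x` of the subdivided standard triangle in barycentric coordinates. -/
def gridPoint (n : ℕ) (x : ℕ × ℕ) : Fin 3 → ℝ :=
  ![x.2 / n, (x.1 - x.2) / n, (n - x.1) / n]

lemma abs_floor_sub_floor_le_one {u v : ℝ} (h : |u - v| ≤ 1) : |⌊u⌋ - ⌊v⌋| ≤ 1 := by
  rw [abs_sub_le_iff] at h ⊢
  have floor_le : ∀ a b : ℝ, a - b ≤ 1 → ⌊a⌋ - ⌊b⌋ ≤ 1 := fun a b hab => by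
    rw [sub_le_iff_le_add', ← Int.floor_add_one]
    exact Int.floor_le_floor (by linarith)
  exact ⟨floor_le u v h.1, floor_le v u h.2⟩

lemma hexAdj_hexRound {z z' : Fin 2 → ℝ} (h : dist z z' < 1 / 2) :
    HexAdj (hexRound z) (hexRound z') := by
  rw [dist_comm, dist_pi_lt_iff (by norm_num)] at h
  have h₀ := h 0
  have h₁ := h 1
  rw [Real.dist_eq] at h₀ h₁
  have row : |⌊z' 1⌋ - ⌊z 1⌋| ≤ 1 := abs_floor_sub_floor_le_one (h₁.le.trans (by norm_num))
  have row_real : |(⌊z' 1⌋ : ℝ) - ⌊z 1⌋| ≤ 1 := by exact_mod_cast row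
  rw [abs_le] at row_real
  rw [abs_sub_lt_iff] at h₀
  refine ⟨abs_floor_sub_floor_le_one ?_, row, ?_⟩
  · rw [abs_sub_le_iff]
    constructor <;> linarith
  · have floor_sub : ∀ y : Fin 2 → ℝ,
        (hexRound y).1 - (hexRound y).2 = ⌊y 0 - ⌊y 1⌋ / 2⌋ := fun y => by
      rw [hexRound, ← Int.floor_sub_intCast]
      ring_nf
    rw [sub_sub_sub_comm, floor_sub, floor_sub]
    refine abs_floor_sub_floor_le_one ?_
    rw [abs_sub_le_iff]
    constructor <;> linarith

lemma dist_lt_one_of_hexRound_eq {z z' : Fin 2 → ℝ} (h : hexRound z = hexRound z') :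
    dist z z' < 1 := by
  obtain ⟨h₀, h₁⟩ := Prod.ext_iff.1 h
  simp only [hexRound] at h₀ h₁
  rw [h₁] at h₀
  rw [dist_pi_lt_iff one_pos, Fin.forall_fin_two]
  refine ⟨?_, Int.abs_sub_lt_one_of_floor_eq_floor h₁⟩
  simpa [Real.dist_eq] using Int.abs_sub_lt_one_of_floor_eq_floor h₀

lemma gridPoint_mem_stdSimplex {n : ℕ} (hn : 0 < n) {x : ℕ × ℕ} (hx : x ∈ gridNodes n) :
    gridPoint n x ∈ stdSimplex ℝ (Fin 3) := by
  have hx₁ : (x.1 : ℝ) ≤ n := Nat.cast_le.2 hx.1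
  have hx₂ : (x.2 : ℝ) ≤ x.1 := Nat.cast_le.2 hx.2
  refine ⟨fun c => ?_, ?_⟩
  · fin_cases c
    exacts [div_nonneg x.2.cast_nonneg n.cast_nonneg, div_nonneg (sub_nonneg.2 hx₂) n.cast_nonneg,
      div_nonneg (sub_nonneg.2 hx₁) n.cast_nonneg]
  · have hn' : (n : ℝ) ≠ 0 := by positivity
    simp only [gridPoint, Fin.sum_univ_three, Matrix.cons_val]
    field_simp
    ring

lemma gridPoint_gridSide (n : ℕ) (c : Fin 3) (j : ℕ) : gridPoint n (gridSide n c j) c = 0 := by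
  fin_cases c <;> simp [gridPoint, gridSide]

lemma hexAdj_gridVertex (T : (_ : ℕ) × (ℕ ⊕ ℕ)) (i j : Fin 3) :
    HexAdj (Prod.map (↑) (↑) (gridVertex T i)) (Prod.map (↑) (↑) (gridVertex T j)) := by
  obtain ⟨m, k | k⟩ := T <;> fin_cases i <;> fin_cases j <;> simp [HexAdj, gridVertex]

lemma dist_gridPoint_gridVertex_le (n : ℕ) (T : (_ : ℕ) × (ℕ ⊕ ℕ)) (i j : Fin 3) :
    dist (gridPoint n (gridVertex T i)) (gridPoint n (gridVertex T j)) ≤ 1 / n := by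
  obtain ⟨h₁, h₂, h₃⟩ := hexAdj_gridVertex T j i
  rw [abs_sub_comm] at h₁
  have cast_le : ∀ a b : ℤ, |a - b| ≤ 1 → |((a : ℝ) - b) / n| ≤ 1 / n := fun a b h => by
    rw [abs_div, Nat.abs_cast]
    gcongr
    exact_mod_cast h
  rw [dist_pi_le_iff (by positivity), Fin.forall_fin_succ, Fin.forall_fin_two]
  simp only [Real.dist_eq, gridPoint, ← sub_div, Matrix.cons_val_zero, Matrix.cons_val_succ]
  refine ⟨cast_le _ _ h₂, ?_, ?_⟩
  · convert cast_le _ _ h₃ using 3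
    push_cast [Prod.map_fst, Prod.map_snd]
    ring
  · convert cast_le _ _ h₁ using 3
    push_cast [Prod.map_fst, Prod.map_snd]
    ring

end Discretization

section Continuous

lemma exists_const_mem_of_forall_dist_lt {ι X : Type*} [Finite ι] [Nonempty ι] [MetricSpace X]
    {Z : Set (ι → X)} (hZ : IsCompact Z)
    (h : ∀ ε > 0, ∃ z ∈ Z, ∀ i j, dist (z i) (z j) < ε) : ∃ x, Function.const ι x ∈ Z := by
  cases nonempty_fintype ι
  obtain ⟨i₀⟩ := ‹Nonempty ι›
  obtain ⟨z₁, hz₁, -⟩ := h 1 one_pos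
  obtain ⟨z, hz, hmin⟩ := hZ.exists_isMinOn (f := fun z => dist z (Function.const ι (z i₀)))
    ⟨z₁, hz₁⟩ (Continuous.continuousOn (by unfold Function.const; fun_prop))
  suffices z = Function.const ι (z i₀) from ⟨z i₀, this ▸ hz⟩
  by_contra hne
  obtain ⟨z', hz', hlt⟩ := h _ (dist_pos.2 hne)
  exact ((dist_pi_lt_iff (dist_pos.2 hne)).2 fun i => hlt i i₀).not_ge (hmin hz')

variable {F : Finset (Fin 3) → (Fin 3 → ℝ) → Fin 2 → ℝ}

lemma exists_dist_gridPoint_lt (hF : ∀ s, ContinuousOn (F s) (stdSimplex ℝ (Fin 3))) {ε : ℝ}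
    (hε : 0 < ε) : ∃ n > 0, ∀ T ∈ gridTriangles n, ∀ s i j,
      dist (F s (gridPoint n (gridVertex T i))) (F s (gridPoint n (gridVertex T j))) < ε := by
  have uniform := (isCompact_stdSimplex ℝ (Fin 3)).uniformContinuousOn_of_continuous
    (f := fun w s => F s w) (continuousOn_pi.2 hF)
  obtain ⟨δ, hδ, hdist⟩ := Metric.uniformContinuousOn_iff.1 uniform ε hε
  obtain ⟨n, hn⟩ := exists_nat_one_div_lt hδ
  have mem : ∀ T ∈ gridTriangles (n + 1), ∀ i,
      gridPoint (n + 1) (gridVertex T i) ∈ stdSimplex ℝ (Fin 3) :=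
    fun T hT i => gridPoint_mem_stdSimplex n.succ_pos (gridVertex_mem_gridNodes hT i)
  refine ⟨n + 1, n.succ_pos, fun T hT s i j => ?_⟩
  refine (dist_le_pi_dist _ _ s).trans_lt (hdist _ (mem T hT i) _ (mem T hT j) ?_)
  exact (dist_gridPoint_gridVertex_le (n + 1) T i j).trans_lt (by exact_mod_cast hn)

lemma exists_isExactCover_dist_lt (hF : ∀ s, ContinuousOn (F s) (stdSimplex ℝ (Fin 3)))
    (hglue : ∀ c s, ∀ w ∈ stdSimplex ℝ (Fin 3), w c = 0 → F (insert c s) w = F s w)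
    {ε : ℝ} (hε : 0 < ε) :
    ∃ S, IsExactCover S ∧ ∃ w : Fin 3 → Fin 3 → ℝ, (∀ t, w t ∈ stdSimplex ℝ (Fin 3)) ∧
      ∀ t t', dist (F (S t) (w t)) (F (S t') (w t')) < ε := by
  have dist_smul : ∀ y y' : Fin 2 → ℝ, dist (ε⁻¹ • y) (ε⁻¹ • y') = dist y y' / ε := fun y y' => by
    rw [dist_smul₀, norm_inv, Real.norm_of_nonneg hε.le, inv_mul_eq_div]
  obtain ⟨n, hn, hdist⟩ := exists_dist_gridPoint_lt hF (half_pos hε)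
  have octahedral : IsOctahedralMap n fun s x => hexRound (ε⁻¹ • F s (gridPoint n x)) := by
    constructor
    · intro c s j hj
      rw [hglue c s _ (gridPoint_mem_stdSimplex hn (gridSide_mem_gridNodes hj c))
        (gridPoint_gridSide n c j)]
    · intro s T hT i j
      refine hexAdj_hexRound ?_
      rw [dist_smul, div_lt_iff₀ hε, one_div_mul_eq_div]
      exact hdist T hT s i j
  obtain ⟨S, hS, p, hp⟩ := octahedral.exists_isExactCover
  choose x hx hxp using hp
  refine ⟨S, hS, fun t => gridPoint n (x t), fun t => gridPoint_mem_stdSimplex hn (hx t),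
    fun t t' => ?_⟩
  have := dist_lt_one_of_hexRound_eq ((hxp t).trans (hxp t').symm)
  rwa [dist_smul, div_lt_one hε] at this

theorem exists_isExactCover_forall_mem_image (hF : ∀ s, ContinuousOn (F s) (stdSimplex ℝ (Fin 3)))
    (hglue : ∀ c s, ∀ w ∈ stdSimplex ℝ (Fin 3), w c = 0 → F (insert c s) w = F s w) :
    ∃ S, IsExactCover S ∧ ∃ y, ∀ t, y ∈ F (S t) '' stdSimplex ℝ (Fin 3) := by
  let Z : Set (Fin 3 → Fin 2 → ℝ) :=
    ⋃ S ∈ {S | IsExactCover S}, Set.univ.pi fun t => F (S t) '' stdSimplex ℝ (Fin 3)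
  have compact_Z : IsCompact Z := (Set.toFinite _).isCompact_biUnion fun S _ =>
    isCompact_univ_pi fun t => (isCompact_stdSimplex ℝ (Fin 3)).image_of_continuousOn (hF (S t))
  have close : ∀ ε > 0, ∃ z ∈ Z, ∀ t t', dist (z t) (z t') < ε := fun ε hε => by
    obtain ⟨S, hS, w, hw, hdist⟩ := exists_isExactCover_dist_lt hF hglue hε
    exact ⟨_, Set.mem_biUnion hS fun t _ => Set.mem_image_of_mem (F (S t)) (hw t), hdist⟩
  obtain ⟨y, hy⟩ := exists_const_mem_of_forall_dist_lt compact_Z close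
  obtain ⟨S, hS, hyS⟩ := Set.mem_iUnion₂.1 hy
  exact ⟨S, hS, y, fun t => hyS t (Set.mem_univ t)⟩

end Continuous

section Rainbow

variable {ι κ : Type*} [DecidableEq κ]

/-- The point with barycentric coordinates `w` in the rainbow simplex whose vertex of colour `c` is
`(c, v c)`. -/
def rainbowPoint (v : ι → κ) (w : ι → ℝ) : ι × κ → ℝ :=
  fun z => if z.2 = v z.1 then w z.1 else 0

lemma continuous_rainbowPoint (v : ι → κ) : Continuous (rainbowPoint v) :=
  continuous_pi fun z => continuous_if_const _ (fun _ => continuous_apply z.1)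
    fun _ => continuous_const

lemma rainbowPoint_congr {v v' : ι → κ} {w : ι → ℝ} (h : ∀ c, w c ≠ 0 → v c = v' c) :
    rainbowPoint v w = rainbowPoint v' w := by
  ext z
  by_cases hz : w z.1 = 0
  · simp only [rainbowPoint, hz, ite_self]
  · rw [rainbowPoint, rainbowPoint, h z.1 hz]

lemma rainbowPoint_mem_stdSimplex [Fintype ι] [Fintype κ] (v : ι → κ) {w : ι → ℝ}
    (hw : w ∈ stdSimplex ℝ ι) : rainbowPoint v w ∈ stdSimplex ℝ (ι × κ) := by
  refine ⟨fun z => ?_, ?_⟩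
  · rw [rainbowPoint]
    split_ifs
    exacts [hw.1 z.1, le_rfl]
  · simp [rainbowPoint, Fintype.sum_prod_type, hw.2]

lemma rainbowPoint_mem_triangleFace (v : Fin 3 → Fin 3) {w : Fin 3 → ℝ}
    (hw : w ∈ stdSimplex ℝ (Fin 3)) : rainbowPoint v w ∈ triangleFace v :=
  ⟨rainbowPoint_mem_stdSimplex v hw, fun _ hz => (ite_ne_right_iff.1 hz).1⟩

lemma triangleFace_subset_K333 (v : Fin 3 → Fin 3) : triangleFace v ⊆ K333 := by
  refine fun x hx => ⟨hx.1, fun c => card_le_one.2 fun z hz z' hz' => ?_⟩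
  simp only [mem_filter, mem_univ, true_and] at hz hz'
  have same_color : z.1 = z'.1 := hz.2.trans hz'.2.symm
  exact Prod.ext same_color (by rw [hx.2 z hz.1, hx.2 z' hz'.1, same_color])

lemma rainbowPoint_mem_K333 (v : Fin 3 → Fin 3) {w : Fin 3 → ℝ}
    (hw : w ∈ stdSimplex ℝ (Fin 3)) : rainbowPoint v w ∈ K333 :=
  triangleFace_subset_K333 v (rainbowPoint_mem_triangleFace v hw)

lemma inducedMap_rainbowPoint (q : Fin 3 → Fin 3 → Fin 2) (v : Fin 3 → Fin 3) (w : Fin 3 → ℝ) :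
    inducedMap q (rainbowPoint v w) = rainbowPoint (fun c => q c (v c)) w := by
  ext z
  simp only [inducedMap, rainbowPoint, ← ite_and]
  rw [sum_eq_single (v z.1) (fun b _ hb => if_neg fun h => hb h.2) (by simp)]
  simp only [and_true, eq_comm]

end Rainbow

section ThreeToTwo

lemma exists_forall_ne_imp_eq (q : Fin 3 → Fin 2) : ∃ i a, ∀ j, j ≠ i → q j = q a := by
  revert q
  decide

lemma IsExactCover.exists_injective {S : Fin 3 → Finset (Fin 3)} (hS : IsExactCover S)
    (i : Fin 3 → Fin 3) :
    ∃ v : Fin 3 → Fin 3 → Fin 3, (∀ c, Function.Injective fun t => v t c) ∧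
      ∀ t c, v t c = i c ↔ c ∈ S t := by
  choose t₀ ht₀ unique using hS
  refine ⟨fun t c => Equiv.swap (t₀ c) (i c) t, fun c => (Equiv.swap (t₀ c) (i c)).injective,
    fun t c => ?_⟩
  rw [Equiv.swap_apply_eq_iff, Equiv.swap_apply_right]
  exact ⟨fun h => h ▸ ht₀ c, unique c t⟩

/-- The vertices of the triangle of `K333` parametrized by the face `s` of the octahedron: `i c` in
the colours `c ∈ s`, and `a c` in the others. -/
def faceVertex (i a : Fin 3 → Fin 3) (s : Finset (Fin 3)) (c : Fin 3) : Fin 3 :=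
  if c ∈ s then i c else a c

lemma exists_isExactCover_rainbowPoint {f : (Fin 3 × Fin 3 → ℝ) → EuclideanSpace ℝ (Fin 2)}
    (hf : ContinuousOn f K333) (i a : Fin 3 → Fin 3) :
    ∃ S, IsExactCover S ∧ ∃ y, ∀ t, ∃ w ∈ stdSimplex ℝ (Fin 3),
      f (rainbowPoint (faceVertex i a (S t)) w) = y := by
  let F (s : Finset (Fin 3)) (w : Fin 3 → ℝ) : Fin 2 → ℝ :=
    (f (rainbowPoint (faceVertex i a s) w)).ofLp
  have continuous_F : ∀ s, ContinuousOn (F s) (stdSimplex ℝ (Fin 3)) := fun s =>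
    (PiLp.continuous_ofLp 2 _).comp_continuousOn
      (hf.comp (continuous_rainbowPoint _).continuousOn fun w => rainbowPoint_mem_K333 _)
  have glue_F : ∀ c s, ∀ w ∈ stdSimplex ℝ (Fin 3), w c = 0 → F (insert c s) w = F s w := by
    intro c s w _ hwc
    refine congrArg (fun x => (f x).ofLp) (rainbowPoint_congr fun d hd => ?_)
    have hdc : d ≠ c := fun h => hd (h ▸ hwc)
    simp only [faceVertex, mem_insert, hdc, false_or]
  obtain ⟨S, hS, y, hy⟩ := exists_isExactCover_forall_mem_image continuous_F glue_F
  refine ⟨S, hS, WithLp.toLp 2 y, fun t => ?_⟩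
  obtain ⟨w, hw, hwy⟩ := hy t
  exact ⟨w, hw, congrArg (WithLp.toLp 2) hwy⟩

end ThreeToTwo

end ColoredTverberg

open ColoredTverberg in
theorem colored_tverberg_three_to_two_general (q : Fin 3 → Fin 3 → Fin 2)
    (f : (Fin 3 × Fin 3 → ℝ) → EuclideanSpace ℝ (Fin 2)) (hf : ContinuousOn f K333)
    (hfactor : ∀ x ∈ K333, ∀ x' ∈ K333, inducedMap q x = inducedMap q x' → f x = f x') :
    ∃ v : Fin 3 → Fin 3 → Fin 3, (∀ c, Function.Injective fun t => v t c) ∧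
      ∃ y, ∀ t, y ∈ f '' triangleFace (v t) := by
  choose i a hia using fun c => exists_forall_ne_imp_eq (q c)
  obtain ⟨S, hS, y, hy⟩ := exists_isExactCover_rainbowPoint hf i a
  obtain ⟨v, hinj, hv⟩ := hS.exists_injective i
  have same_image : ∀ t c, q c (v t c) = q c (faceVertex i a (S t) c) := fun t c => by
    by_cases hc : c ∈ S t
    · rw [faceVertex, if_pos hc, (hv t c).2 hc]
    · rw [faceVertex, if_neg hc, hia c _ (mt (hv t c).1 hc)]
  refine ⟨v, hinj, y, fun t => ?_⟩
  obtain ⟨w, hw, rfl⟩ := hy t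
  refine ⟨rainbowPoint (v t) w, rainbowPoint_mem_triangleFace _ hw,
    hfactor _ (rainbowPoint_mem_K333 _ hw) _ (rainbowPoint_mem_K333 _ hw) ?_⟩
  simp only [inducedMap_rainbowPoint, same_image]

/-- **Corollary 1.6** (`cor:3-to-2`, topological colored Tverberg for 3-to-2 maps).
Let `f : K_{3,3,3} → ℝ²` be continuous and admit a factorization `f = g ∘ α`, where
`α : K_{3,3,3} → K_{2,2,2}` is the simplicial map induced by surjections `[3] → [2]`
on each color class and `g : K_{2,2,2} → ℝ²` is continuous. Then there exist three
pairwise vertex-disjoint rainbow triangles `Δ₁, Δ₂, Δ₃` in `K_{3,3,3}` with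
`f(Δ₁) ∩ f(Δ₂) ∩ f(Δ₃) ≠ ∅`. -/
theorem colored_tverberg_three_to_two
    (q : Fin 3 → Fin 3 → Fin 2) (hq : ∀ c, Function.Surjective (q c))
    (g : ((Fin 3 × Fin 2) → ℝ) → EuclideanSpace ℝ (Fin 2))
    (hg : ContinuousOn g K222)
    (f : ((Fin 3 × Fin 3) → ℝ) → EuclideanSpace ℝ (Fin 2))
    (hf : ContinuousOn f K333)
    (hfactor : ∀ x ∈ K333, f x = g (inducedMap q x)) :
    ∃ v : Fin 3 → Fin 3 → Fin 3,
      -- the three triangles are pairwise vertex-disjoint (one vertex of each color)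
      (∀ c : Fin 3, Function.Injective fun t : Fin 3 => v t c) ∧
      -- their images under `f` have a common point
      (∃ y : EuclideanSpace ℝ (Fin 2), ∀ t : Fin 3, y ∈ f '' triangleFace (v t)) := by
  refine colored_tverberg_three_to_two_general q f hf fun x hx x' hx' h => ?_
  rw [hfactor x hx, hfactor x' hx', h]
end
end
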